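/- arXiv:0711.1890 — 10 statements merged into one kernel-verified Lean document; each statement's English description precedes it below -/
import Mathlib

section
/- Let i be a positive integer and let c > 0, m > 0 be real. Let X and W be independent real random variables on a probability space, where X has the Gamma distribution with shape i and rate c, and W has the Gamma distribution with shape m and rate m (Nakagami-m power fading). Then the random variable X/W has probability density function f(x) = m^(m+1) · (Γ(m+i)/(Γ(m+1)·Γ(i))) · c^i · x^(i-1) / (m + c·x)^(m+i) for x > 0 (and 0 for x ≤ 0) with respect to Lebesgue measure. -/
open MeasureTheory ProbabilityTheory Real

lemma aux_point (i : ℕ) (hi : 0 < i) (c m : ℝ) (hc : 0 < c) (hm : 0 < m) (w y : ℝ) (hw : 0 < w)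
    (hy : 0 < y) :
    gammaPDFReal m m w * (w * gammaPDFReal i c (w * y)) =
    (m ^ (m + 1) * (Real.Gamma (m + i) / (Real.Gamma (m + 1) * Real.Gamma i))
              * c ^ i * y ^ (i - 1) / (m + c * y) ^ (m + (i : ℝ))) *
      gammaPDFReal (m + i) (m + c * y) w := by
  have hwy : 0 < w * y := mul_pos hw hy
  have hp : 0 < m + c * y := by positivity
  have hi' : (0 : ℝ) < i := by exact_mod_cast hi
  unfold gammaPDFReal
  rw [if_pos hw.le, if_pos hwy.le, if_pos hw.le]
  have e1 : (w * y) ^ ((i : ℝ) - 1) = w ^ ((i : ℝ) - 1) * y ^ (i - 1) := by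
    rw [Real.mul_rpow hw.le hy.le, ← Real.rpow_natCast y (i - 1), Nat.cast_sub hi, Nat.cast_one]
  have e2 : w ^ (m + i - 1) = w ^ (m - 1) * w * w ^ ((i : ℝ) - 1) := by
    nth_rewrite 3 [← Real.rpow_one w]
    rw [← Real.rpow_add hw, ← Real.rpow_add hw]; congr 1; ring
  have e3 : Real.exp (-((m + c * y) * w)) = Real.exp (-(m * w)) * Real.exp (-(c * (w * y))) := by
    rw [← Real.exp_add]; congr 1; ring
  rw [e1, e2, e3, Real.rpow_natCast c i, Real.Gamma_add_one hm.ne', Real.rpow_add hm, Real.rpow_one]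
  have h1 := (Real.Gamma_pos_of_pos hm).ne'
  have h2 := (Real.Gamma_pos_of_pos hi').ne'
  have h3 := (Real.Gamma_pos_of_pos (add_pos hm hi')).ne'
  have h4 := (Real.rpow_pos_of_pos hp (m + i)).ne'
  generalize (m + c * y) ^ (m + (i : ℝ)) = A at *
  generalize w ^ (m - 1) = B at *
  generalize w ^ ((i : ℝ) - 1) = C at *
  generalize m ^ m = D at *
  field_simp

lemma meas_gammaPDF (a r : ℝ) : Measurable (gammaPDF a r) :=
  (measurable_gammaPDFReal a r).ennreal_ofReal

lemma aux_scale (g : ℝ → ENNReal) (hg : Measurable g) (w : ℝ) (hw : 0 < w) :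
    ∫⁻ x, g x = ∫⁻ y, ENNReal.ofReal w * g (w * y) := by
  conv_lhs => rw [← Real.smul_map_volume_mul_left hw.ne']
  rw [lintegral_smul_measure, lintegral_map hg (by fun_prop), abs_of_pos hw,
    lintegral_const_mul _ (by fun_prop), smul_eq_mul]

lemma ae_ne_zero : ∀ᵐ x : ℝ, x ≠ 0 := by
  simp [ae_iff]

/-- The density of the path loss with fading `ξ_i = X/W` for `δ = d/α = 1`:
if `X ~ Gamma(i, c)` and `W ~ Gamma(m, m)` (Nakagami-`m` power fading) are independent,
then `X/W` has pdf `x ↦ m^(m+1) · binom(m+i-1, m) · c^i · x^(i-1) / (m + c x)^(m+i)` on `x > 0`. -/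
theorem pathloss_with_fading_pdf
    {Ω : Type*} [MeasureSpace Ω] [IsProbabilityMeasure (ℙ : Measure Ω)]
    (i : ℕ) (hi : 0 < i) (c m : ℝ) (hc : 0 < c) (hm : 0 < m)
    (X W : Ω → ℝ) (hX : Measurable X) (hW : Measurable W)
    (hXd : Measure.map X ℙ = gammaMeasure i c)
    (hWd : Measure.map W ℙ = gammaMeasure m m)
    (hindep : IndepFun X W ℙ) :
    Measure.map (fun ω => X ω / W ω) ℙ
      = volume.withDensity (fun x : ℝ => ENNReal.ofReal
          (if 0 < x then
            m ^ (m + 1) * (Real.Gamma (m + i) / (Real.Gamma (m + 1) * Real.Gamma i))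
              * c ^ i * x ^ (i - 1) / (m + c * x) ^ (m + (i : ℝ))
          else 0)) := by
  have hi' : (0 : ℝ) < i := by exact_mod_cast hi
  have := isProbabilityMeasure_gammaMeasure hi' hc
  have := isProbabilityMeasure_gammaMeasure hm hm
  have hmi := meas_gammaPDF i c
  have hmm := meas_gammaPDF m m
  have hD : Measurable (fun x : ℝ => ENNReal.ofReal
          (if 0 < x then
            m ^ (m + 1) * (Real.Gamma (m + i) / (Real.Gamma (m + 1) * Real.Gamma i))
              * c ^ i * x ^ (i - 1) / (m + c * x) ^ (m + (i : ℝ))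
          else 0)) := by
    refine Measurable.ennreal_ofReal (Measurable.ite measurableSet_Ioi ?_ measurable_const)
    fun_prop
  have hprod := hindep.map_prod_eq_prod_map_map hX.aemeasurable hW.aemeasurable
  rw [hXd, hWd] at hprod
  have hcomp : Measure.map (fun ω => X ω / W ω) ℙ =
      Measure.map (fun p : ℝ × ℝ => p.1 / p.2) ((gammaMeasure i c).prod (gammaMeasure m m)) := by
    rw [← hprod, Measure.map_map (by fun_prop) (by fun_prop)]; rfl
  rw [hcomp]
  refine Measure.ext_of_lintegral _ fun f hf => ?_
  rw [lintegral_map hf (by fun_prop), lintegral_prod_symm _ (by fun_prop),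
    lintegral_withDensity_eq_lintegral_mul _ hD hf]
  have s1 : ∀ w : ℝ, ∫⁻ x, f (x / w) ∂(gammaMeasure i c) = ∫⁻ x, gammaPDF i c x * f (x / w) := by
    intro w
    rw [gammaMeasure, lintegral_withDensity_eq_lintegral_mul _ hmi (by fun_prop)]; rfl
  simp only [s1]
  have hinner : Measurable fun w : ℝ => ∫⁻ x, gammaPDF i c x * f (x / w) := by
    apply Measurable.lintegral_prod_right
    fun_prop
  rw [gammaMeasure, lintegral_withDensity_eq_lintegral_mul _ hmm hinner]
  have s2 : ∫⁻ w, (gammaPDF m m * fun w : ℝ => ∫⁻ x, gammaPDF i c x * f (x / w)) w =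
      ∫⁻ w, ∫⁻ y, gammaPDF m m w * (ENNReal.ofReal w * gammaPDF i c (w * y)) * f y := by
    refine lintegral_congr_ae ?_
    filter_upwards [ae_ne_zero] with w hw
    simp only [Pi.mul_apply]
    rcases lt_or_gt_of_ne hw with h | h
    · simp [gammaPDF_of_neg h]
    · rw [aux_scale _ (by fun_prop) w h, ← lintegral_const_mul _ (by fun_prop)]
      refine lintegral_congr fun y => ?_
      rw [mul_div_cancel_left₀ _ hw]
      ring
  rw [s2, lintegral_lintegral_swap (by fun_prop)]
  refine lintegral_congr_ae ?_
  filter_upwards [ae_ne_zero] with y hy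
  rw [lintegral_mul_const _ (by fun_prop), Pi.mul_apply]
  congr 1
  rcases lt_or_gt_of_ne hy with h | h
  · rw [if_neg h.not_gt, ENNReal.ofReal_zero]
    rw [lintegral_eq_zero_iff (by fun_prop)]
    filter_upwards [ae_ne_zero] with w hw
    rcases lt_or_gt_of_ne hw with h' | h'
    · simp [gammaPDF_of_neg h']
    · simp [gammaPDF_of_neg (mul_neg_of_pos_of_neg h' h)]
  · have hp : 0 < m + c * y := by positivity
    rw [if_pos h]
    conv_rhs => rw [← mul_one (ENNReal.ofReal _),
      ← lintegral_gammaPDF_eq_one (add_pos hm hi') hp]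
    rw [← lintegral_const_mul _ (meas_gammaPDF _ _)]
    refine lintegral_congr_ae ?_
    filter_upwards [ae_ne_zero] with w hw
    rcases lt_or_gt_of_ne hw with h' | h'
    · simp [gammaPDF_of_neg h']
    · have g1 := Real.Gamma_pos_of_pos hi'
      have g2 := Real.Gamma_pos_of_pos (add_pos hm hi')
      have g3 := Real.Gamma_pos_of_pos (add_pos hm one_pos)
      unfold gammaPDF
      rw [← ENNReal.ofReal_mul h'.le, ← ENNReal.ofReal_mul (gammaPDFReal_nonneg hm hm w),
        ← ENNReal.ofReal_mul (by positivity), aux_point i hi c m hc hm w y h' h]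
end

section
/- Let m > 0 be real. Then ∫₀¹ (1 − Γ_ic(m, m·x)/Γ(m)) dx = (m^(m−1)/Γ(m)) · e^(−m), where Γ_ic(a, y) = ∫_y^∞ t^(a−1)·e^(−t) dt denotes the upper incomplete gamma function. In particular, for m = 1 the value is 1/e. -/
open MeasureTheory Real

/-- The upper incomplete gamma function `Γ_ic(a, y) = ∫_y^∞ t^(a−1) e^(−t) dt`. -/
noncomputable def upperIncompleteGamma (a y : ℝ) : ℝ :=
  ∫ t in Set.Ioi y, t ^ (a - 1) * Real.exp (-t)

theorem nak_aux (m : ℝ) (hm : 0 < m) (g : ℝ → ℝ) (hg : g = fun t => t ^ (m - 1) * Real.exp (-t)) 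
    (hint : IntegrableOn g (Set.Ioi 0)) :
    ∫ y in (0:ℝ)..m, (∫ t in (0:ℝ)..y, g t) = m ^ m * Real.exp (-m) := by
  have hii : ∀ y, 0 ≤ y → IntervalIntegrable g volume 0 y := fun y hy =>
    (intervalIntegrable_iff_integrableOn_Ioc_of_le hy).2
      (hint.mono_set Set.Ioc_subset_Ioi_self)
  have hLc : ContinuousOn (fun y => ∫ t in (0:ℝ)..y, g t) (Set.Icc 0 m) := by
    have := intervalIntegral.continuousOn_primitive_interval (a := 0) (b := m) (f := g)
      (μ := volume) (by
        rw [Set.uIcc_of_le hm.le, integrableOn_Icc_iff_integrableOn_Ioc]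
        exact hint.mono_set Set.Ioc_subset_Ioi_self)
    rwa [Set.uIcc_of_le hm.le] at this
  have hpc : Continuous (fun y : ℝ => y ^ m * Real.exp (-y)) :=
    (Real.continuous_rpow_const hm.le).mul (by fun_prop)
  have key := intervalIntegral.integral_eq_sub_of_hasDerivAt_of_le (a := 0) (b := m)
    (f := fun y => (y - m) * (∫ t in (0:ℝ)..y, g t) + y ^ m * Real.exp (-y))
    (f' := fun y => ∫ t in (0:ℝ)..y, g t) hm.le
    (((continuous_id.sub continuous_const).continuousOn.mul hLc).add hpc.continuousOn)
    (by
      intro y hy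
      have hcg : ∀ z ∈ Set.Ioi (0:ℝ), ContinuousAt g z := by
        intro z hz
        rw [hg]
        exact (Real.continuousAt_rpow_const _ _ (Or.inl (ne_of_gt hz))).mul (by fun_prop)
      have h1 : HasDerivAt (fun y => ∫ t in (0:ℝ)..y, g t) (g y) y :=
        intervalIntegral.integral_hasDerivAt_right (hii y hy.1.le)
          (ContinuousAt.stronglyMeasurableAtFilter isOpen_Ioi hcg y hy.1) (hcg y hy.1)
      have h2 : HasDerivAt (fun y : ℝ => y ^ m) (m * y ^ (m-1)) y :=
        Real.hasDerivAt_rpow_const (Or.inl hy.1.ne')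
      have h3 : HasDerivAt (fun y : ℝ => Real.exp (-y)) (Real.exp (-y) * (-1)) y :=
        (hasDerivAt_neg y).exp
      have h4 := (((hasDerivAt_id y).sub_const m).mul h1).add (h2.mul h3)
      refine h4.congr_deriv ?_
      have h5 : y ^ m = y ^ (m-1) * y := by
        rw [← Real.rpow_add_one hy.1.ne']; simp
      simp only [hg, h5, id]
      ring)
    (by
      apply ContinuousOn.intervalIntegrable
      rwa [Set.uIcc_of_le hm.le])
  rw [key]
  simp [Real.zero_rpow hm.ne']

/-- The fraction of nodes leaving an interval due to Nakagami-`m` fading: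
`∫₀¹ (1 − Γ_ic(m, m x)/Γ(m)) dx = (m^(m−1)/Γ(m)) e^(−m)`;
in particular, for `m = 1` the value is `1/e`. -/
theorem nakagami_cdf_integral (m : ℝ) (hm : 0 < m) :
    (∫ x in Set.Ioo (0 : ℝ) 1, (1 - upperIncompleteGamma m (m * x) / Real.Gamma m))
      = m ^ (m - 1) / Real.Gamma m * Real.exp (-m) ∧
    (m = 1 →
      (∫ x in Set.Ioo (0 : ℝ) 1, (1 - upperIncompleteGamma m (m * x) / Real.Gamma m))
        = 1 / Real.exp 1) := by
  have main : (∫ x in Set.Ioo (0 : ℝ) 1, (1 - upperIncompleteGamma m (m * x) / Real.Gamma m))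
      = m ^ (m - 1) / Real.Gamma m * Real.exp (-m) := by
    have hG : Real.Gamma m ≠ 0 := (Real.Gamma_pos_of_pos hm).ne'
    obtain ⟨g, hg⟩ : ∃ g : ℝ → ℝ, g = fun t => t ^ (m - 1) * Real.exp (-t) := ⟨_, rfl⟩
    have hint : IntegrableOn g (Set.Ioi 0) := by
      have := Real.GammaIntegral_convergent hm
      rw [hg]
      simpa only [mul_comm] using this
    have hGam : Real.Gamma m = ∫ t in Set.Ioi 0, g t := by
      rw [Real.Gamma_eq_integral hm, hg]
      simp only [mul_comm]
    have hcdf : ∀ x ∈ Set.Ioo (0:ℝ) 1, 1 - upperIncompleteGamma m (m * x) / Real.Gamma m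
        = (∫ t in (0:ℝ)..(m * x), g t) / Real.Gamma m := by
      intro x hx
      have hmx : 0 ≤ m * x := (mul_pos hm hx.1).le
      have h := intervalIntegral.integral_interval_add_Ioi hint
        (hint.mono_set (Set.Ioi_subset_Ioi hmx))
      have h' : upperIncompleteGamma m (m * x) = ∫ t in Set.Ioi (m * x), g t := by
        rw [hg]; rfl
      rw [h', eq_div_iff hG, sub_mul, div_mul_cancel₀ _ hG, hGam, ← h]
      ring
    rw [setIntegral_congr_fun measurableSet_Ioo hcdf, ← integral_Ioc_eq_integral_Ioo,
      ← intervalIntegral.integral_of_le zero_le_one, intervalIntegral.integral_div,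
      intervalIntegral.integral_comp_mul_left (fun y => ∫ t in (0:ℝ)..y, g t) hm.ne',
      mul_zero, mul_one, nak_aux m hm g hg hint, Real.rpow_sub_one hm.ne', smul_eq_mul]
    field_simp
  refine ⟨main, fun h => ?_⟩
  rw [main, h]
  simp [Real.exp_neg]
end

section
/- Let c > 0. (a) If X and Y are independent random variables each exponentially distributed with rate c, then E[X/(2X + Y)] = 1 − ln 2. (b) If X is exponential with rate c and Y is independent with the Gamma distribution of shape 2 and rate c, then E[X/(2X + Y)] = 3 − 4·ln 2. (c) If X and Y are independent, each with the Gamma distribution of shape 2 and rate c, then E[X/(2X + Y)] = 12·ln 2 − 8. -/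
open MeasureTheory ProbabilityTheory Real

noncomputable def gamP (a c x : ℝ) : ℝ := c ^ a / Gamma a * x ^ (a - 1) * exp (-(c * x))

lemma gamP_meas (a c : ℝ) : Measurable (gamP a c) := by
  unfold gamP; fun_prop

lemma gamP_nonneg {a c x : ℝ} (ha : 0 < a) (hc : 0 < c) (hx : 0 < x) : 0 ≤ gamP a c x := by
  have := Gamma_pos_of_pos ha
  unfold gamP; positivity

lemma gammaMeasure_eq_gamP (a c : ℝ) : gammaMeasure a c =
    (volume.restrict (Set.Ioi 0)).withDensity (fun x => ENNReal.ofReal (gamP a c x)) := by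
  rw [← withDensity_indicator measurableSet_Ioi, gammaMeasure]
  apply withDensity_congr_ae
  have h0 : ∀ᵐ x : ℝ, x ≠ 0 := by simp [ae_iff]
  filter_upwards [h0] with x hx
  rcases lt_or_gt_of_ne hx with h | h
  · rw [gammaPDF_of_neg h, Set.indicator_of_notMem]
    simpa using h.le
  · rw [gammaPDF_of_nonneg h.le, Set.indicator_of_mem (by simpa using h), gamP]

lemma ae_pos_of_map {Ω : Type*} [MeasurableSpace Ω] {μ : Measure Ω} {a c : ℝ} {X : Ω → ℝ}
    (hX : Measurable X) (h : Measure.map X μ = gammaMeasure a c) : ∀ᵐ ω ∂μ, 0 < X ω := by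
  apply ae_of_ae_map hX.aemeasurable (p := fun x => 0 < x)
  rw [h, gammaMeasure_eq_gamP]
  apply (withDensity_absolutelyContinuous _ _).ae_le
  exact ae_restrict_mem measurableSet_Ioi

lemma lint_scale {x : ℝ} (hx : 0 < x) (g : ℝ → ENNReal) :
    ∫⁻ y in Set.Ioi 0, g y = ∫⁻ t in Set.Ioi 0, ENNReal.ofReal x * g (x * t) := by
  have him : (fun t : ℝ => x * t) '' Set.Ioi 0 = Set.Ioi 0 := by
    rw [Set.image_mul_left_Ioi hx, mul_zero]
  have := lintegral_image_eq_lintegral_abs_deriv_mul (s := Set.Ioi (0:ℝ))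
    (f := fun t => x * t) (f' := fun _ => x) measurableSet_Ioi
    (fun t _ => by simpa using ((hasDerivAt_id t).const_mul x).hasDerivWithinAt)
    (fun s _ t _ h => mul_left_cancel₀ hx.ne' h) g
  rw [him] at this
  rw [this, abs_of_pos hx]

lemma inner_lint {a b c t : ℝ} (ha : 0 < a) (hb : 0 < b) (hc : 0 < c) (ht : 0 < t) :
    ∫⁻ x in Set.Ioi 0, ENNReal.ofReal (gamP a c x * (x * (gamP b c (x * t) * (1 / (2 + t)))))
    = ENNReal.ofReal (Gamma (a + b) / (Gamma a * Gamma b) * (t ^ (b - 1) /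
      ((2 + t) * (1 + t) ^ (a + b)))) := by
  have hGa := Gamma_pos_of_pos ha
  have hGb := Gamma_pos_of_pos hb
  have hab : 0 < a + b := by positivity
  have hGab := Gamma_pos_of_pos hab
  have hr : 0 < c * (1 + t) := by positivity
  have hI := integral_rpow_mul_exp_neg_mul_Ioi hab hr
  have hint : Integrable (fun x : ℝ => x ^ (a + b - 1) * rexp (-(c * (1 + t) * x)))
      (volume.restrict (Set.Ioi 0)) := by
    apply Integrable.of_integral_ne_zero
    rw [hI]; positivity
  set K : ℝ := c ^ (a + b) / (Gamma a * Gamma b) * (t ^ (b - 1) / (2 + t)) with hK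
  have hKpos : 0 < K := by positivity
  have e : ∀ x ∈ Set.Ioi (0:ℝ),
      ENNReal.ofReal (gamP a c x * (x * (gamP b c (x * t) * (1 / (2 + t)))))
      = ENNReal.ofReal (K * (x ^ (a + b - 1) * rexp (-(c * (1 + t) * x)))) := by
    intro x hx
    have hx : 0 < x := hx
    congr 1
    have e1 : rexp (-(c * (1 + t) * x)) = rexp (-(c * x)) * rexp (-(c * (x * t))) := by
      rw [← exp_add]; ring_nf
    have e2 : x ^ (a + b - 1) = x ^ (a - 1) * x * x ^ (b - 1) := by
      nth_rewrite 3 [← rpow_one x]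
      rw [← rpow_add hx, ← rpow_add hx]; ring_nf
    rw [hK, e1, e2, rpow_add hc]
    unfold gamP
    rw [mul_rpow hx.le ht.le]
    field_simp
  rw [setLIntegral_congr_fun measurableSet_Ioi e, ← ofReal_integral_eq_lintegral_ofReal
    (hint.const_mul K), integral_const_mul, hI]
  · congr 1
    rw [hK, one_div, inv_rpow hr.le, mul_rpow hc.le (by positivity)]
    field_simp
  · filter_upwards [ae_restrict_mem measurableSet_Ioi] with x hx
    have hx : 0 < x := hx
    simp only [Pi.zero_apply]
    positivity

lemma ratio_expect {Ω : Type*} [MeasurableSpace Ω] {μ : Measure Ω} [IsProbabilityMeasure μ]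
    {a b c : ℝ} (ha : 0 < a) (hb : 0 < b) (hc : 0 < c) {X Y : Ω → ℝ}
    (hX : Measurable X) (hY : Measurable Y)
    (hXl : Measure.map X μ = gammaMeasure a c) (hYl : Measure.map Y μ = gammaMeasure b c)
    (h : IndepFun X Y μ) :
    ∫ ω, X ω / (2 * X ω + Y ω) ∂μ = ∫ t in Set.Ioi 0,
      Gamma (a + b) / (Gamma a * Gamma b) * (t ^ (b - 1) / ((2 + t) * (1 + t) ^ (a + b))) := by
  have hGa := Gamma_pos_of_pos ha
  have hGb := Gamma_pos_of_pos hb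
  have hGab := Gamma_pos_of_pos (add_pos ha hb)
  haveI := isProbabilityMeasure_gammaMeasure ha hc
  haveI := isProbabilityMeasure_gammaMeasure hb hc
  have mP := gamP_meas a c
  have mQ := gamP_meas b c
  rw [integral_eq_lintegral_of_nonneg_ae, integral_eq_lintegral_of_nonneg_ae]
  rotate_left
  · filter_upwards [ae_restrict_mem measurableSet_Ioi] with x hx
    have hx : 0 < x := hx
    simp only [Pi.zero_apply]
    positivity
  · apply Measurable.aestronglyMeasurable; fun_prop
  · filter_upwards [ae_pos_of_map hX hXl, ae_pos_of_map hY hYl] with ω h1 h2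
    simp only [Pi.zero_apply]
    positivity
  · apply Measurable.aestronglyMeasurable; fun_prop
  congr 1
  have hmap := (indepFun_iff_map_prod_eq_prod_map_map hX.aemeasurable hY.aemeasurable).1 h
  rw [hXl, hYl] at hmap
  have mF : Measurable (fun p : ℝ × ℝ => ENNReal.ofReal (p.1 / (2 * p.1 + p.2))) := by fun_prop
  have s1 : ∫⁻ ω, ENNReal.ofReal (X ω / (2 * X ω + Y ω)) ∂μ =
      ∫⁻ p, ENNReal.ofReal (p.1 / (2 * p.1 + p.2)) ∂((gammaMeasure a c).prod (gammaMeasure b c)) := by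
    rw [← hmap, lintegral_map mF (hX.prodMk hY)]
  rw [s1, lintegral_prod _ mF.aemeasurable]
  have s2 : ∀ x : ℝ, ∫⁻ y, ENNReal.ofReal (x / (2 * x + y)) ∂(gammaMeasure b c) =
      ∫⁻ y in Set.Ioi 0, ENNReal.ofReal (gamP b c y) * ENNReal.ofReal (x / (2 * x + y)) := by
    intro x
    rw [gammaMeasure_eq_gamP, lintegral_withDensity_eq_lintegral_mul _ (by fun_prop) (by fun_prop)]
    rfl
  have m2 : Measurable (fun x : ℝ => ∫⁻ y, ENNReal.ofReal (x / (2 * x + y)) ∂(gammaMeasure b c)) :=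
    Measurable.lintegral_prod_right' mF
  rw [gammaMeasure_eq_gamP a, lintegral_withDensity_eq_lintegral_mul _ (by fun_prop) m2]
  have s3 : ∀ x ∈ Set.Ioi (0:ℝ), ((fun x => ENNReal.ofReal (gamP a c x)) *
      (fun x : ℝ => ∫⁻ y, ENNReal.ofReal (x / (2 * x + y)) ∂(gammaMeasure b c))) x =
      ∫⁻ t in Set.Ioi 0,
        ENNReal.ofReal (gamP a c x * (x * (gamP b c (x * t) * (1 / (2 + t))))) := by
    intro x hx
    have hx : 0 < x := hx
    simp only [Pi.mul_apply]
    rw [s2, lint_scale hx, ← lintegral_const_mul _ (by fun_prop)]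
    apply setLIntegral_congr_fun measurableSet_Ioi
    intro t ht
    have ht : 0 < t := ht
    simp only
    have hp := gamP_nonneg ha hc hx
    have hq := gamP_nonneg hb hc (mul_pos hx ht)
    rw [← ENNReal.ofReal_mul hq, ← ENNReal.ofReal_mul hx.le, ← ENNReal.ofReal_mul hp]
    congr 4
    field_simp
  rw [setLIntegral_congr_fun measurableSet_Ioi s3, lintegral_lintegral_swap]
  · apply setLIntegral_congr_fun measurableSet_Ioi
    intro t ht
    exact inner_lint ha hb hc ht
  · apply Measurable.aemeasurable
    unfold Function.uncurry
    fun_prop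

lemma tendsto_inv1 : Filter.Tendsto (fun t : ℝ => (1 + t)⁻¹) Filter.atTop (nhds 0) :=
  tendsto_inv_atTop_zero.comp (Filter.tendsto_atTop_add_const_left _ _ Filter.tendsto_id)

lemma tendsto_logdiff :
    Filter.Tendsto (fun t : ℝ => log (2 + t) - log (1 + t)) Filter.atTop (nhds 0) := by
  have h : Filter.Tendsto (fun t : ℝ => log (1 + (1 + t)⁻¹)) Filter.atTop (nhds 0) := by
    have h1 := (tendsto_inv1.const_add 1).log (by norm_num)
    simpa using h1
  refine h.congr' ?_
  filter_upwards [Filter.eventually_gt_atTop 0] with t ht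
  rw [← log_div (by positivity) (by positivity)]
  congr 1
  field_simp
  ring

/-- Common evaluation: `g = A (log(2+t) - log(1+t)) + B/(1+t) + C/(1+t)^2 + D/(1+t)^3`. -/
lemma eval_int (A B C D : ℝ) (f : ℝ → ℝ) (hf : ∀ t, 0 ≤ t → 0 ≤ f t)
    (h : ∀ t, 0 ≤ t → f t = A * (1 / (2 + t) - 1 / (1 + t)) - B / (1 + t) ^ 2 -
      2 * C / (1 + t) ^ 3 - 3 * D / (1 + t) ^ 4) :
    ∫ t in Set.Ioi 0, f t = - (A * log 2 + B + C + D) := by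
  have := integral_Ioi_of_hasDerivAt_of_nonneg' (a := 0) (l := 0) (g' := f)
    (g := fun t => A * (log (2 + t) - log (1 + t)) + B * (1 + t)⁻¹ + C * (1 + t)⁻¹ ^ 2
      + D * (1 + t)⁻¹ ^ 3) ?_ (fun x hx => hf x (le_of_lt hx)) ?_
  · rw [this]; norm_num
  · intro t ht
    have ht : 0 ≤ t := ht
    have n1 : 1 + t ≠ 0 := by positivity
    have n2 : 2 + t ≠ 0 := by positivity
    have d1 : HasDerivAt (fun t : ℝ => 1 + t) 1 t := (hasDerivAt_id t).const_add 1
    have d2 : HasDerivAt (fun t : ℝ => 2 + t) 1 t := (hasDerivAt_id t).const_add 2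
    have di := d1.fun_inv n1
    rw [h t ht]
    refine HasDerivAt.congr_deriv (((((d2.log n2).fun_sub (d1.log n1)).const_mul A).fun_add (di.const_mul B)).fun_add
      ((di.fun_pow 2).const_mul C) |>.fun_add ((di.fun_pow 3).const_mul D)) ?_
    norm_num
    field_simp
    ring
  · have := (((tendsto_logdiff.const_mul A).add (tendsto_inv1.const_mul B)).add
      ((tendsto_inv1.pow 2).const_mul C)).add ((tendsto_inv1.pow 3).const_mul D)
    simpa using this

/-- Reordering probabilities `P_{1,1} = 1 − ln 2`, `P_{1,2} = 3 − 4 ln 2`, `P_{2,2} = 12 ln 2 − 8`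
in the standard network: values of `E[X/(2X + Y)]` for independent Gamma-distributed `X, Y`. -/
theorem reordering_probabilities
    {Ω : Type*} [MeasureSpace Ω] [IsProbabilityMeasure (ℙ : Measure Ω)]
    (c : ℝ) (hc : 0 < c)
    (X₁ Y₁ X₂ Y₂ X₃ Y₃ : Ω → ℝ)
    (hX₁ : Measurable X₁) (hY₁ : Measurable Y₁)
    (hX₂ : Measurable X₂) (hY₂ : Measurable Y₂)
    (hX₃ : Measurable X₃) (hY₃ : Measurable Y₃)
    (h1X : Measure.map X₁ ℙ = expMeasure c) (h1Y : Measure.map Y₁ ℙ = expMeasure c)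
    (h1 : IndepFun X₁ Y₁ ℙ)
    (h2X : Measure.map X₂ ℙ = expMeasure c) (h2Y : Measure.map Y₂ ℙ = gammaMeasure 2 c)
    (h2 : IndepFun X₂ Y₂ ℙ)
    (h3X : Measure.map X₃ ℙ = gammaMeasure 2 c) (h3Y : Measure.map Y₃ ℙ = gammaMeasure 2 c)
    (h3 : IndepFun X₃ Y₃ ℙ) :
    (∫ ω, X₁ ω / (2 * X₁ ω + Y₁ ω) ∂ℙ = 1 - Real.log 2) ∧
    (∫ ω, X₂ ω / (2 * X₂ ω + Y₂ ω) ∂ℙ = 3 - 4 * Real.log 2) ∧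
    (∫ ω, X₃ ω / (2 * X₃ ω + Y₃ ω) ∂ℙ = 12 * Real.log 2 - 8) := by
  have G2 : Gamma (2:ℝ) = 1 := by simpa using Gamma_nat_eq_factorial 1
  have G3 : Gamma (3:ℝ) = 2 := by
    norm_num [Nat.factorial]
  have G4 : Gamma (4:ℝ) = 6 := by
    norm_num [Nat.factorial]
  have p2 : ∀ x : ℝ, x ^ (2:ℝ) = x ^ 2 := fun x => by exact_mod_cast rpow_natCast x 2
  have p3 : ∀ x : ℝ, x ^ (3:ℝ) = x ^ 3 := fun x => by exact_mod_cast rpow_natCast x 3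
  have p4 : ∀ x : ℝ, x ^ (4:ℝ) = x ^ 4 := fun x => by exact_mod_cast rpow_natCast x 4
  have a2 : (1:ℝ) + 1 = 2 := by norm_num
  have a3 : (1:ℝ) + 2 = 3 := by norm_num
  have a4 : (2:ℝ) + 2 = 4 := by norm_num
  have b1 : (2:ℝ) - 1 = 1 := by norm_num
  refine ⟨?_, ?_, ?_⟩
  · rw [ratio_expect one_pos one_pos hc hX₁ hY₁ h1X h1Y h1]
    simp only [a2, sub_self, rpow_zero, G2, Gamma_one, p2]
    rw [eval_int 1 (-1) 0 0]
    · ring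
    · intro t ht; positivity
    · intro t ht; field_simp; ring
  · rw [ratio_expect one_pos two_pos hc hX₂ hY₂ h2X h2Y h2]
    simp only [a3, b1, rpow_one, G2, G3, Gamma_one, p3]
    rw [eval_int 4 (-4) 1 0]
    · ring
    · intro t ht; positivity
    · intro t ht; field_simp; ring
  · rw [ratio_expect two_pos two_pos hc hX₃ hY₃ h3X h3Y h3]
    simp only [a4, b1, rpow_one, G2, G4, p4]
    rw [eval_int (-12) 12 (-6) 2]
    · ring
    · intro t ht; positivity
    · intro t ht; field_simp; ring
end

section
/- Let c > 0. For each positive integer k, let X_k and Y_k be independent random variables each having the Gamma distribution with shape k and rate c. Then the sequence E[X_k/(2X_k + Y_k)] converges to 1/3 as k → ∞. -/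
open MeasureTheory ProbabilityTheory Real Filter

lemma gpdf_int {a r : ℝ} (ha : 0 < a) (hr : 0 < r) :
    Integrable (gammaPDFReal a r) ∧ ∫ x, gammaPDFReal a r x = 1 := by
  have h := lintegral_gammaPDF_eq_one ha hr
  have hn : 0 ≤ᵐ[volume] gammaPDFReal a r := ae_of_all _ (gammaPDFReal_nonneg ha hr)
  have hm : AEStronglyMeasurable (gammaPDFReal a r) volume :=
    (measurable_gammaPDFReal a r).aestronglyMeasurable
  unfold gammaPDF at h
  refine ⟨(lintegral_ofReal_ne_top_iff_integrable hm hn).1 (by rw [h]; simp), ?_⟩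
  rw [integral_eq_lintegral_of_nonneg_ae hn hm, h]; simp

lemma gpdf_mul {a r : ℝ} (ha : 0 < a) (hr : 0 < r) (x : ℝ) :
    gammaPDFReal a r x * x = a / r * gammaPDFReal (a + 1) r x := by
  unfold gammaPDFReal
  split_ifs with hx
  · have h1 : x ^ (a + 1 - 1) = x ^ (a - 1) * x := by
      rcases hx.eq_or_lt with h | h
      · subst h; rw [zero_rpow (by linarith)]; simp
      · rw [← rpow_add_one h.ne']; congr 1; ring
    rw [h1, Gamma_add_one ha.ne', rpow_add_one hr.ne']
    have := (Gamma_pos_of_pos ha).ne'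
    field_simp
  · simp

lemma gpdf_sq {a r : ℝ} (ha : 0 < a) (hr : 0 < r) (x : ℝ) :
    gammaPDFReal a r x * (x - a / r) ^ 2 = a / r * ((a + 1) / r) * gammaPDFReal (a + 1 + 1) r x
      - 2 * (a / r) ^ 2 * gammaPDFReal (a + 1) r x + (a / r) ^ 2 * gammaPDFReal a r x := by
  have h1 := gpdf_mul ha hr x
  have h2 := gpdf_mul (by linarith : 0 < a + 1) hr x
  linear_combination (x - 2 * (a / r)) * h1 + a / r * h2

lemma gmeas_var {a r : ℝ} (ha : 0 < a) (hr : 0 < r) :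
    Integrable (fun x => (x - a / r) ^ 2) (gammaMeasure a r) ∧
      ∫ x, (x - a / r) ^ 2 ∂(gammaMeasure a r) = a / r ^ 2 := by
  obtain ⟨i0, e0⟩ := gpdf_int ha hr
  obtain ⟨i1, e1⟩ := gpdf_int (by linarith : 0 < a + 1) hr
  obtain ⟨i2, e2⟩ := gpdf_int (by linarith : 0 < a + 1 + 1) hr
  have hm : Measurable (gammaPDF a r) := (measurable_gammaPDFReal a r).ennreal_ofReal
  have hlt : ∀ᵐ x, gammaPDF a r x < ⊤ := ae_of_all _ fun x => ENNReal.ofReal_lt_top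
  have hs : ∀ x, (gammaPDF a r x).toReal • (x - a / r) ^ 2 =
      a / r * ((a + 1) / r) * gammaPDFReal (a + 1 + 1) r x
      - 2 * (a / r) ^ 2 * gammaPDFReal (a + 1) r x + (a / r) ^ 2 * gammaPDFReal a r x := by
    intro x
    rw [gammaPDF, ENNReal.toReal_ofReal (gammaPDFReal_nonneg ha hr x), smul_eq_mul, gpdf_sq ha hr]
  unfold gammaMeasure
  constructor
  · rw [integrable_withDensity_iff_integrable_smul' hm hlt]
    simp_rw [hs]
    exact ((i2.const_mul _).sub (i1.const_mul _)).add (i0.const_mul _)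
  · rw [integral_withDensity_eq_integral_toReal_smul hm hlt]
    simp_rw [hs]
    have i3 : Integrable (fun x => a / r * ((a + 1) / r) * gammaPDFReal (a + 1 + 1) r x
      - 2 * (a / r) ^ 2 * gammaPDFReal (a + 1) r x) := (i2.const_mul _).sub (i1.const_mul _)
    rw [integral_add i3 (i0.const_mul _),
      integral_sub (i2.const_mul _) (i1.const_mul _), integral_const_mul, integral_const_mul,
      integral_const_mul, e0, e1, e2]
    field_simp
    ring

lemma gmeas_nonneg (a r : ℝ) : ∀ᵐ x ∂(gammaMeasure a r), 0 ≤ x := by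
  unfold gammaMeasure
  have hm : Measurable (gammaPDF a r) := (measurable_gammaPDFReal a r).ennreal_ofReal
  rw [ae_withDensity_iff hm]
  refine ae_of_all _ fun x hx => ?_
  by_contra h
  exact hx (gammaPDF_of_neg (not_le.1 h))

lemma ratio_bound {x y m e : ℝ} (hx : 0 ≤ x) (hy : 0 ≤ y) (hm : 0 < m) (he : 0 < e) :
    |x / (2 * x + y) - 1 / 3| ≤ e + ((x - m) ^ 2 + (y - m) ^ 2) / (e * m ^ 2) := by
  have key : |x / (2 * x + y) - 1 / 3| ≤ (2 / 3) * (|x - m| + |y - m|) / m := by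
    rw [le_div_iff₀ hm]
    have a1 := abs_nonneg (x - m)
    have a2 := abs_nonneg (y - m)
    by_cases h : m ≤ 2 * x + y
    · have hp : 0 < 2 * x + y := by linarith
      have : x / (2 * x + y) - 1 / 3 = (x - y) / (3 * (2 * x + y)) := by
        have hne := hp.ne'
        rw [div_sub_div _ _ hne (by norm_num), div_eq_div_iff (by positivity) (by positivity)]
        ring
      rw [this, abs_div, abs_of_pos (by positivity : 0 < 3 * (2 * x + y))]
      have h3 : |x - y| ≤ |x - m| + |y - m| := by
        rw [abs_sub_comm y m]; exact abs_sub_le x m y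
      rw [div_mul_eq_mul_div, div_le_iff₀ (by positivity)]
      nlinarith [mul_le_mul h3 h hm.le (by positivity), mul_nonneg (add_nonneg a1 a2) hp.le]
    · have h4 : |x / (2 * x + y) - 1 / 3| ≤ 1 / 3 := by
        have : 0 ≤ x / (2 * x + y) := by positivity
        have : x / (2 * x + y) ≤ 1 / 2 := by
          apply div_le_of_le_mul₀ <;> linarith
        rw [abs_le]; constructor <;> linarith
      have := neg_abs_le (x - m)
      nlinarith
  refine key.trans ?_
  have h : ∀ t : ℝ, |t| / m ≤ e / 2 + t ^ 2 / (e * m ^ 2) := by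
    intro t
    have h1 : e / 2 + t ^ 2 / (e * m ^ 2) - |t| / m
        = ((|t| / m - e / 2) ^ 2 + e ^ 2 / 4) / e := by
      rw [← sq_abs t]; field_simp; ring
    have : 0 ≤ ((|t| / m - e / 2) ^ 2 + e ^ 2 / 4) / e := by positivity
    linarith
  have h1 := h (x - m)
  have h2 := h (y - m)
  have h3 : 0 ≤ |x - m| / m := by positivity
  have h4 : 0 ≤ |y - m| / m := by positivity
  rw [mul_div_assoc, add_div, add_div]
  linarith


/-- The limit of the reordering probabilities `P_{k,k}` in the standard network:
if `X_k, Y_k` are independent Gamma(k, c) random variables, then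
`E[X_k/(2X_k + Y_k)] → 1/3` as `k → ∞`. -/
theorem reordering_probability_limit
    {Ω : Type*} [MeasureSpace Ω] [IsProbabilityMeasure (ℙ : Measure Ω)]
    (c : ℝ) (hc : 0 < c)
    (X Y : ℕ → Ω → ℝ)
    (hXm : ∀ k, Measurable (X k)) (hYm : ∀ k, Measurable (Y k))
    (hX : ∀ k, 1 ≤ k → Measure.map (X k) ℙ = gammaMeasure k c)
    (hY : ∀ k, 1 ≤ k → Measure.map (Y k) ℙ = gammaMeasure k c)
    (hind : ∀ k, 1 ≤ k → IndepFun (X k) (Y k) ℙ) :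
    Tendsto (fun k => ∫ ω, X k ω / (2 * X k ω + Y k ω) ∂ℙ) atTop (nhds (1 / 3)) := by
  have bound : ∀ k : ℕ, 1 ≤ k →
      |(∫ ω, X k ω / (2 * X k ω + Y k ω) ∂ℙ) - 1 / 3| ≤ 3 / √(k : ℝ) := by
    intro k hk
    have hk0 : (0 : ℝ) < k := by exact_mod_cast hk
    obtain ⟨gi, ge⟩ := gmeas_var hk0 hc
    have tr : ∀ Z : Ω → ℝ, Measurable Z → Measure.map Z ℙ = gammaMeasure k c →
        (∀ᵐ ω ∂(ℙ : Measure Ω), 0 ≤ Z ω) ∧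
        Integrable (fun ω => (Z ω - k / c) ^ 2) (ℙ : Measure Ω) ∧
        ∫ ω, (Z ω - k / c) ^ 2 ∂(ℙ : Measure Ω) = k / c ^ 2 := by
      intro Z hZ h
      have hn := gmeas_nonneg k c
      have hg : Measurable fun x : ℝ => (x - k / c) ^ 2 := by fun_prop
      rw [← h] at hn gi ge
      refine ⟨ae_of_ae_map hZ.aemeasurable hn,
        gi.comp_measurable hZ, ?_⟩
      rw [← ge, integral_map hZ.aemeasurable hg.aestronglyMeasurable]
    obtain ⟨xn, xi, xe⟩ := tr _ (hXm k) (hX k hk)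
    obtain ⟨yn, yi, ye⟩ := tr _ (hYm k) (hY k hk)
    have hm : (0 : ℝ) < k / c := by positivity
    have hs : (0 : ℝ) < √(k : ℝ) := Real.sqrt_pos.2 hk0
    have he : 0 < 1 / √(k : ℝ) := by positivity
    have hmeas : Measurable fun ω => X k ω / (2 * X k ω + Y k ω) := by
      have := hXm k
      have := hYm k
      fun_prop
    have fi : Integrable (fun ω => X k ω / (2 * X k ω + Y k ω)) (ℙ : Measure Ω) := by
      refine Integrable.of_bound hmeas.aestronglyMeasurable 1 ?_
      filter_upwards [xn, yn] with ω h1 h2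
      rw [Real.norm_eq_abs, abs_of_nonneg (by positivity)]
      apply div_le_of_le_mul₀ <;> linarith
    have e1 : (∫ ω, X k ω / (2 * X k ω + Y k ω) ∂ℙ) - 1 / 3
        = ∫ ω, (X k ω / (2 * X k ω + Y k ω) - 1 / 3) ∂ℙ := by
      rw [integral_sub fi (integrable_const _)]; simp
    have bi := (xi.add yi).div_const (1 / √(k : ℝ) * (k / c) ^ 2)
    rw [e1]
    refine (abs_integral_le_integral_abs).trans ?_
    refine (integral_mono_ae (fi.sub (integrable_const _)).abs
      ((integrable_const (1 / √(k : ℝ))).add bi) ?_).trans_eq ?_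
    · filter_upwards [xn, yn] with ω h1 h2
      exact ratio_bound h1 h2 hm he
    · rw [integral_add' (integrable_const _) bi, integral_div (1 / √(k : ℝ) * (k / c) ^ 2),
        integral_add' xi yi, xe, ye]
      have h2 : √(k : ℝ) ^ 2 = k := Real.sq_sqrt hk0.le
      simp only [integral_const, probReal_univ, smul_eq_mul, one_mul]
      generalize √(k : ℝ) = s at h2 hs
      rw [← h2]
      field_simp
      ring
  have lim : Tendsto (fun k : ℕ => 3 / √(k : ℝ)) atTop (nhds 0) :=
    (Real.tendsto_sqrt_atTop.comp tendsto_natCast_atTop_atTop).const_div_atTop 3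
  rw [tendsto_iff_norm_sub_tendsto_zero]
  refine squeeze_zero' (Eventually.of_forall fun _ => norm_nonneg _) ?_ lim
  filter_upwards [eventually_ge_atTop 1] with k hk
  exact bound k hk
end

section
/- Let δ > 0, m > 0, and s > 0 be real. Then (∫₀^∞ x^δ · Γ_ic(m, m·s·x) dx) / (∫₀^∞ x^(δ−1) · Γ_ic(m, m·s·x) dx) = δ·(δ + m)/(m·s·(δ + 1)), where Γ_ic(a, y) = ∫_y^∞ t^(a−1)·e^(−t) dt is the upper incomplete gamma function. In particular, this equals (1 + δ/m) times δ/(s·(δ+1)), the corresponding value without fading. -/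
open MeasureTheory Real

lemma inner_t (a c m t : ℝ) (ha : 0 < a) (hc : 0 < c) (ht : 0 < t) :
    IntegrableOn (fun x : ℝ => (if c * x < t then x ^ (a - 1) * (t ^ (m - 1) * Real.exp (-t)) else 0))
      (Set.Ioi 0) ∧
    (∫ x in Set.Ioi (0 : ℝ), (if c * x < t then x ^ (a - 1) * (t ^ (m - 1) * Real.exp (-t)) else 0))
      = (1 / (a * c ^ a)) * (Real.exp (-t) * t ^ ((m + a) - 1)) := by
  have hE : (fun x : ℝ => (if c * x < t then x ^ (a - 1) * (t ^ (m - 1) * Real.exp (-t)) else 0))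
      = (Set.Iio (t / c)).indicator (fun x => x ^ (a - 1) * (t ^ (m - 1) * Real.exp (-t))) := by
    funext x
    simp only [Set.indicator, Set.mem_Iio, lt_div_iff₀ hc, mul_comm c x]
  have htc : 0 < t / c := div_pos ht hc
  have hI : IntegrableOn (fun x : ℝ => x ^ (a - 1) * (t ^ (m - 1) * Real.exp (-t)))
      (Set.Ioo 0 (t / c)) := by
    have h := (intervalIntegral.intervalIntegrable_rpow' (a := 0) (b := t / c)
      (r := a - 1) (by linarith)).mul_const (t ^ (m - 1) * Real.exp (-t))
    rw [intervalIntegrable_iff_integrableOn_Ioo_of_le htc.le] at h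
    exact h
  rw [hE]
  constructor
  · rw [IntegrableOn, integrable_indicator_iff measurableSet_Iio, IntegrableOn,
      Measure.restrict_restrict measurableSet_Iio, Set.inter_comm, Set.Ioi_inter_Iio]
    exact hI
  · rw [integral_indicator measurableSet_Iio, Measure.restrict_restrict measurableSet_Iio,
      Set.inter_comm, Set.Ioi_inter_Iio, ← integral_Ioc_eq_integral_Ioo,
      ← intervalIntegral.integral_of_le htc.le, intervalIntegral.integral_mul_const,
      integral_rpow (Or.inl (by linarith))]
    have h1 : a - 1 + 1 = a := by ring
    have h2 : m + a - 1 = a + (m - 1) := by ring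
    rw [h1, h2, Real.zero_rpow ha.ne', Real.div_rpow ht.le hc.le, Real.rpow_add ht]
    have := Real.rpow_pos_of_pos hc a
    field_simp
    ring

lemma mellin_uig (a c m : ℝ) (ha : 0 < a) (hc : 0 < c) (hm : 0 < m) :
    (∫ x in Set.Ioi (0 : ℝ), x ^ (a - 1) * upperIncompleteGamma m (c * x))
      = Real.Gamma (m + a) / (a * c ^ a) := by
  set f : ℝ → ℝ → ℝ := fun x t =>
    if c * x < t then x ^ (a - 1) * (t ^ (m - 1) * Real.exp (-t)) else 0 with hf
  have hmeas : Measurable (Function.uncurry f) := by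
    refine Measurable.ite (measurableSet_lt (by fun_prop) (by fun_prop)) (by fun_prop) (by fun_prop)
  have hfn : ∀ x ∈ Set.Ioi (0:ℝ), ∀ t ∈ Set.Ioi (0:ℝ), ‖f x t‖ = f x t := by
    intro x hx t ht
    have hx' : 0 < x := hx
    have ht' : 0 < t := ht
    rw [Real.norm_of_nonneg]
    simp only [hf]
    split_ifs
    · positivity
    · exact le_rfl
  have hint : Integrable (Function.uncurry f)
      ((volume.restrict (Set.Ioi (0:ℝ))).prod (volume.restrict (Set.Ioi (0:ℝ)))) := by
    rw [integrable_prod_iff' hmeas.aestronglyMeasurable]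
    constructor
    · filter_upwards [ae_restrict_mem measurableSet_Ioi] with t ht
      exact (inner_t a c m t ha hc ht).1
    · have hG := (Real.GammaIntegral_convergent (s := m + a) (by linarith)).const_mul
        (1 / (a * c ^ a))
      refine (integrable_congr ?_).mpr hG
      filter_upwards [ae_restrict_mem measurableSet_Ioi] with t ht
      rw [← (inner_t a c m t ha hc ht).2]
      refine setIntegral_congr_fun measurableSet_Ioi fun x hx => ?_
      exact hfn x hx t ht
  have h1 : (∫ x in Set.Ioi (0 : ℝ), x ^ (a - 1) * upperIncompleteGamma m (c * x))
      = ∫ x in Set.Ioi (0 : ℝ), ∫ t in Set.Ioi (0:ℝ), f x t := by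
    refine setIntegral_congr_fun measurableSet_Ioi fun x hx => ?_
    have hcx : 0 < c * x := mul_pos hc hx
    have hE : f x = (Set.Ioi (c * x)).indicator
        (fun t => x ^ (a - 1) * (t ^ (m - 1) * Real.exp (-t))) := by
      funext t
      simp only [hf, Set.indicator, Set.mem_Ioi]
    simp only [hE]
    rw [integral_indicator measurableSet_Ioi, Measure.restrict_restrict measurableSet_Ioi,
      Set.inter_eq_left.mpr (Set.Ioi_subset_Ioi hcx.le), integral_const_mul]
    rfl
  rw [h1, integral_integral_swap hint, Real.Gamma_eq_integral (by linarith)]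
  have h2 : (∫ t in Set.Ioi (0 : ℝ), ∫ x in Set.Ioi (0:ℝ), f x t)
      = ∫ t in Set.Ioi (0 : ℝ), (1 / (a * c ^ a)) * (Real.exp (-t) * t ^ ((m + a) - 1)) :=
    setIntegral_congr_fun measurableSet_Ioi fun t ht => (inner_t a c m t ha hc ht).2
  rw [h2, integral_const_mul]
  ring

/-- The mean path loss of a uniformly randomly chosen connected node under Nakagami-`m`
fading equals `δ(δ + m)/(m s (δ + 1))`, which is `(1 + δ/m)` times the value `δ/(s(δ+1))`
without fading. -/
theorem mean_connected_node (δ m s : ℝ) (hδ : 0 < δ) (hm : 0 < m) (hs : 0 < s) :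
    (∫ x in Set.Ioi (0 : ℝ), x ^ δ * upperIncompleteGamma m (m * s * x))
        / (∫ x in Set.Ioi (0 : ℝ), x ^ (δ - 1) * upperIncompleteGamma m (m * s * x))
      = δ * (δ + m) / (m * s * (δ + 1)) ∧
    δ * (δ + m) / (m * s * (δ + 1)) = (1 + δ / m) * (δ / (s * (δ + 1))) := by
  have hc : 0 < m * s := mul_pos hm hs
  constructor
  · have h1 := mellin_uig (δ + 1) (m * s) m (by linarith) hc hm
    have h0 := mellin_uig δ (m * s) m hδ hc hm
    rw [add_sub_cancel_right] at h1
    rw [h1, h0, ← add_assoc, Real.Gamma_add_one (by positivity), Real.rpow_add_one hc.ne']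
    have hG := Real.Gamma_pos_of_pos (add_pos hm hδ)
    have hp := Real.rpow_pos_of_pos hc δ
    generalize (m * s) ^ δ = q at *
    field_simp
    ring
  · field_simp
    ring
end

section
/- For s̃ > 0 and positive integers m, let p_m(s̃) = ∫₀¹ Γ_ic(m, m·s̃·x)/Γ(m) dx, where Γ_ic(a, y) = ∫_y^∞ t^(a−1)·e^(−t) dt. Then, for every fixed s̃ > 0, the sequence m ↦ p_m(s̃) is increasing in m, and lim_{m→∞} p_m(s̃) = min{1, 1/s̃}. -/
open MeasureTheory Real Filter

/-- The probability `p_m(s̃) = ∫₀¹ Γ_ic(m, m s̃ x)/Γ(m) dx` that a randomly chosen node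
in `[0, a)` can be reached, where `s̃ = a s`. -/
noncomputable def broadcastReachProb (m : ℕ) (st : ℝ) : ℝ :=
  ∫ x in Set.Ioo (0 : ℝ) 1, upperIncompleteGamma m ((m : ℝ) * st * x) / Real.Gamma m


noncomputable def brF (n : ℕ) (x : ℝ) : ℝ :=
  (n+1:ℝ)^(n+1) / (n.factorial : ℝ) * (x^n * Real.exp (-((n+1:ℝ) * x)))

lemma br_pos (n : ℕ) {x : ℝ} (hx : 0 < x) : 0 < brF n x := by
  unfold brF; positivity

lemma br_cont (n : ℕ) : Continuous (brF n) := by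
  unfold brF; fun_prop

lemma br_mom (k : ℕ) {r : ℝ} (hr : 0 < r) :
    ∫ x in Set.Ioi (0:ℝ), x^k * Real.exp (-(r*x)) = (k.factorial : ℝ) / r^(k+1) := by
  have h := Real.integral_rpow_mul_exp_neg_mul_Ioi (a := (k+1:ℝ)) (r := r) (by positivity) hr
  simp only [add_sub_cancel_right, Real.rpow_natCast, Real.Gamma_nat_eq_factorial] at h
  rw [h, show ((k:ℝ)+1) = ((k+1:ℕ):ℝ) by push_cast; ring, Real.rpow_natCast, one_div, inv_pow]
  field_simp

lemma br_int (k : ℕ) {r : ℝ} (hr : 0 < r) :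
    IntegrableOn (fun x : ℝ => x^k * Real.exp (-(r*x))) (Set.Ioi 0) := by
  by_contra h
  have h1 := br_mom k hr
  rw [integral_undef h] at h1
  have : 0 < (k.factorial : ℝ) / r^(k+1) := by positivity
  linarith

lemma br_fmom_int (n j : ℕ) : IntegrableOn (fun x => x^j * brF n x) (Set.Ioi 0) := by
  have := (br_int (n+j) (r := (n+1:ℝ)) (by positivity)).const_mul ((n+1:ℝ)^(n+1) / (n.factorial : ℝ))
  refine this.congr (Eventually.of_forall fun x => ?_)
  simp only [brF, pow_add]; ring

lemma br_fmom (n j : ℕ) : ∫ x in Set.Ioi (0:ℝ), x^j * brF n x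
    = ((n+j).factorial : ℝ) / (n.factorial * (n+1:ℝ)^j) := by
  have : ∀ x : ℝ, x^j * brF n x = ((n+1:ℝ)^(n+1) / (n.factorial : ℝ)) *
      (x^(n+j) * Real.exp (-((n+1:ℝ) * x))) := by
    intro x; simp only [brF, pow_add]; ring
  simp_rw [this]
  rw [integral_const_mul, br_mom (n+j) (by positivity)]
  field_simp
  ring

lemma br_m0 (n : ℕ) : ∫ x in Set.Ioi (0:ℝ), brF n x = 1 := by
  have := br_fmom n 0
  simp only [pow_zero, one_mul, add_zero, mul_one] at this
  rw [this]; field_simp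

lemma br_m1 (n : ℕ) : ∫ x in Set.Ioi (0:ℝ), x * brF n x = 1 := by
  have := br_fmom n 1
  simp only [pow_one, Nat.factorial_succ] at this
  rw [this]; push_cast; field_simp

lemma br_m2 (n : ℕ) : ∫ x in Set.Ioi (0:ℝ), x^2 * brF n x = (n+2)/(n+1) := by
  rw [br_fmom n 2, Nat.factorial_succ, Nat.factorial_succ]; push_cast; field_simp; ring

lemma br_i0 (n : ℕ) : IntegrableOn (brF n) (Set.Ioi 0) := by
  simpa using br_fmom_int n 0

lemma br_i1 (n : ℕ) : IntegrableOn (fun x => x * brF n x) (Set.Ioi 0) := by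
  simpa using br_fmom_int n 1

lemma br_min_int (n : ℕ) {s : ℝ} (hs : 0 < s) :
    IntegrableOn (fun x => min 1 (x/s) * brF n x) (Set.Ioi 0) := by
  refine (br_i0 n).mono' ?_ ?_
  · exact (Continuous.mul (by fun_prop) (br_cont n)).aestronglyMeasurable
  · refine (ae_restrict_iff' measurableSet_Ioi).2 (Eventually.of_forall fun x hx => ?_)
    have h1 := br_pos n hx
    have hx' : 0 < x := hx
    have h2 : 0 ≤ min 1 (x/s) := by positivity
    rw [Real.norm_of_nonneg (by positivity)]
    exact mul_le_of_le_one_left h1.le (min_le_left _ _)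

lemma br_limit {s : ℝ} (hs : 0 < s) :
    Tendsto (fun n : ℕ => ∫ x in Set.Ioi (0:ℝ), min 1 (x/s) * brF n x) atTop
      (nhds (min 1 (1/s))) := by
  have key : ∀ n : ℕ, |(∫ x in Set.Ioi (0:ℝ), min 1 (x/s) * brF n x) - min 1 (1/s)|
      ≤ (1/s) * (1 / √((n:ℝ)+1)) := by
    intro n
    set e : ℝ := 1 / √((n:ℝ)+1) with he
    have he0 : 0 < e := by positivity
    have he2 : e^2 = 1/((n:ℝ)+1) := by
      rw [he, div_pow, Real.sq_sqrt (by positivity)]; simp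
    have i0 := br_i0 n
    have i1 := br_i1 n
    have i2 := br_fmom_int n 2
    have i3 : IntegrableOn (fun x => x^2 * brF n x - 2 * (x * brF n x)) (Set.Ioi 0) :=
      i2.sub (i1.const_mul 2)
    have hm : (∫ x in Set.Ioi (0:ℝ), min 1 (x/s) * brF n x) - min 1 (1/s)
       = ∫ x in Set.Ioi (0:ℝ), (min 1 (x/s) * brF n x - min 1 (1/s) * brF n x) := by
      rw [integral_sub (br_min_int n hs) (i0.const_mul _), integral_const_mul, br_m0, mul_one]
    have hb : ∫ x in Set.Ioi (0:ℝ), (1/(2*s*e)) * ((e^2+1) * brF n x + (x^2 * brF n x - 2 * (x * brF n x)))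
        = (1/s) * e := by
      rw [integral_const_mul, integral_add (i0.const_mul _) i3,
        integral_sub i2 (i1.const_mul 2), integral_const_mul, integral_const_mul, br_m0, br_m1, br_m2]
      have : ((n:ℝ)+2)/(n+1) = 1 + e^2 := by rw [he2]; field_simp; ring
      rw [this]; field_simp; ring
    rw [hm, ← hb, ← Real.norm_eq_abs]
    refine norm_integral_le_of_norm_le
      (((i0.const_mul _).add (i2.sub (i1.const_mul 2))).const_mul _) ?_
    refine (ae_restrict_iff' measurableSet_Ioi).2 (Eventually.of_forall fun x hx => ?_)
    have h1 := br_pos n hx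
    have h2 : |min 1 (x/s) - min 1 (1/s)| ≤ |x-1|/s := by
      have := abs_min_sub_min_le_max 1 (x/s) 1 (1/s)
      rw [sub_self, abs_zero, ← sub_div, abs_div, abs_of_pos hs] at this
      rwa [max_eq_right (by positivity)] at this
    have h3 : |x-1| ≤ (1/(2*e)) * (e^2 + (x-1)^2) := by
      rw [one_div, inv_mul_eq_div, le_div_iff₀ (by positivity)]
      nlinarith [sq_nonneg (|x-1| - e), sq_abs (x-1)]
    rw [← sub_mul, Real.norm_eq_abs, abs_mul, abs_of_pos h1]
    calc _ ≤ ((1/(2*e)) * (e^2 + (x-1)^2))/s * brF n x := by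
            gcongr; exact h2.trans (by gcongr)
      _ = _ := by field_simp; ring
  rw [tendsto_iff_norm_sub_tendsto_zero]
  refine squeeze_zero (fun _ => norm_nonneg _) key ?_
  have h : Tendsto (fun n : ℕ => √((n:ℝ)+1)) atTop atTop :=
    Real.tendsto_sqrt_atTop.comp (tendsto_atTop_add_const_right _ _ tendsto_natCast_atTop_atTop)
  have := (tendsto_const_nhds (x := (1:ℝ))).div_atTop h
  simpa using this.const_mul (1/s)

lemma br_k_mono : StrictMonoOn (fun x : ℝ => x * Real.exp (-x)) (Set.Icc 0 1) := by
  refine strictMonoOn_of_deriv_pos (convex_Icc 0 1) (by fun_prop) ?_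
  intro x hx
  rw [interior_Icc] at hx
  have : HasDerivAt (fun x : ℝ => x * Real.exp (-x)) (1 * Real.exp (-x) + x * (Real.exp (-x) * (-1))) x :=
    (hasDerivAt_id x).mul ((hasDerivAt_neg x).exp)
  rw [this.deriv]
  nlinarith [hx.1, hx.2, Real.exp_pos (-x)]

lemma br_k_anti : StrictAntiOn (fun x : ℝ => x * Real.exp (-x)) (Set.Ici 1) := by
  refine strictAntiOn_of_deriv_neg (convex_Ici 1) (by fun_prop) ?_
  intro x hx
  rw [interior_Ici] at hx
  have hx : 1 < x := hx
  have : HasDerivAt (fun x : ℝ => x * Real.exp (-x)) (1 * Real.exp (-x) + x * (Real.exp (-x) * (-1))) x :=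
    (hasDerivAt_id x).mul ((hasDerivAt_neg x).exp)
  rw [this.deriv]
  nlinarith [Real.exp_pos (-x)]

lemma br_roots {c : ℝ} (hc : 1 < c * Real.exp (-1)) : ∃ a b : ℝ, 0 < a ∧ a < b ∧
    (∀ x, 0 < x → x < a → c * (x * Real.exp (-x)) < 1) ∧
    (∀ x, a ≤ x → x ≤ b → 1 ≤ c * (x * Real.exp (-x))) ∧
    (∀ x, a < x → x < b → 1 < c * (x * Real.exp (-x))) ∧
    (∀ x, b < x → c * (x * Real.exp (-x)) < 1) := by
  have hc0 : 0 < c := by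
    by_contra h
    nlinarith [Real.exp_pos (-1)]
  have hcont : Continuous (fun x : ℝ => c * (x * Real.exp (-x))) := by fun_prop
  have hinf : Tendsto (fun x : ℝ => c * (x * Real.exp (-x))) atTop (nhds 0) := by
    have := (Real.tendsto_pow_mul_exp_neg_atTop_nhds_zero 1).const_mul c
    simpa using this
  obtain ⟨M, hM, hM1⟩ := ((hinf.eventually_lt_const (zero_lt_one)).and (eventually_ge_atTop 1)).exists
  obtain ⟨a, ha, ha'⟩ := intermediate_value_Icc (zero_le_one' ℝ) hcont.continuousOn
    (show (1:ℝ) ∈ Set.Icc _ _ from ⟨by simp, by simpa using hc.le⟩)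
  obtain ⟨b, hb, hb'⟩ := intermediate_value_Icc' hM1 hcont.continuousOn
    (show (1:ℝ) ∈ Set.Icc _ _ from ⟨hM.le, by simpa using hc.le⟩)
  simp only at ha' hb'
  have ha0 : 0 < a := by
    rcases ha.1.eq_or_lt with h | h
    · rw [← h] at ha'; simp at ha'
    · exact h
  have ha1 : a < 1 := by
    rcases ha.2.eq_or_lt with h | h
    · rw [h, one_mul] at ha'; linarith
    · exact h
  have hb1 : 1 < b := by
    rcases hb.1.eq_or_lt with h | h
    · rw [← h, one_mul] at hb'; linarith
    · exact h
  have hmid : ∀ x, a < x → x < b → 1 < c * (x * Real.exp (-x)) := by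
    intro x h1 h2
    rcases le_total x 1 with h | h
    · rw [← ha']
      exact mul_lt_mul_of_pos_left (br_k_mono ha ⟨by linarith, h⟩ h1) hc0
    · rw [← hb']
      exact mul_lt_mul_of_pos_left (br_k_anti h hb1.le h2) hc0
  refine ⟨a, b, ha0, by linarith, ?_, ?_, hmid, ?_⟩
  · intro x h0 h1
    rw [← ha']
    exact mul_lt_mul_of_pos_left (br_k_mono ⟨h0.le, by linarith⟩ ha h1) hc0
  · intro x h1 h2
    rcases h1.eq_or_lt with h | h
    · rw [← h, ha']
    rcases h2.eq_or_lt with h' | h'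
    · rw [h', hb']
    exact (hmid x h h').le
  · intro x h1
    rw [← hb']
    exact mul_lt_mul_of_pos_left (br_k_anti hb1.le (show (1:ℝ) ≤ x by linarith) h1) hc0

lemma br_c (n : ℕ) : 1 < (((n:ℝ)+2)/(n+1))^(n+2) * Real.exp (-1) := by
  have h : -(1/((n:ℝ)+2)) + 1 < Real.exp (-(1/((n:ℝ)+2))) :=
    Real.add_one_lt_exp (by have : (0:ℝ) < 1/((n:ℝ)+2) := by positivity
                            linarith)
  have h2 : -(1/((n:ℝ)+2)) + 1 = (((n:ℝ)+2)/(n+1))⁻¹ := by field_simp; ring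
  rw [h2] at h
  have h3 : ((((n:ℝ)+2)/(n+1))⁻¹)^(n+2) < (Real.exp (-(1/((n:ℝ)+2))))^(n+2) :=
    pow_lt_pow_left₀ h (by positivity) (by omega)
  rw [← Real.exp_nat_mul] at h3
  have h4 : ((n+2:ℕ):ℝ) * (-(1/((n:ℝ)+2))) = -1 := by push_cast; field_simp
  rw [h4, inv_pow, inv_lt_iff_one_lt_mul₀ (by positivity)] at h3
  rw [mul_comm]; exact h3

lemma br_ratio (n : ℕ) (x : ℝ) :
    brF (n+1) x = brF n x * ((((n:ℝ)+2)/(n+1))^(n+2) * (x * Real.exp (-x))) := by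
  unfold brF
  have : Real.exp (-((((n+1:ℕ):ℝ)+1)*x)) = Real.exp (-(((n:ℝ)+1)*x)) * Real.exp (-x) := by
    rw [← Real.exp_add]; congr 1; push_cast; ring
  rw [this, Nat.factorial_succ, div_pow]
  push_cast
  rw [show (n:ℝ)+1+1 = n+2 by ring]
  field_simp
  ring

lemma br_sep (n : ℕ) {s : ℝ} (hs : 0 < s) : ∃ α β u v : ℝ, 0 ≤ u ∧ u < v ∧
    (∀ x, 0 < x → 0 ≤ (min 1 (x/s) - (α * x + β)) * (brF (n+1) x - brF n x)) ∧
    (∀ x, u < x → x < v → 0 < (min 1 (x/s) - (α * x + β)) * (brF (n+1) x - brF n x)) := by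
  obtain ⟨a, b, ha, hab, hl, hm', hm, hr⟩ := br_roots (br_c n)
  have hg : ∀ x, brF (n+1) x - brF n x =
      brF n x * ((((n:ℝ)+2)/(n+1))^(n+2) * (x * Real.exp (-x)) - 1) := by
    intro x; rw [br_ratio]; ring
  have gl : ∀ x, 0 < x → x < a → brF (n+1) x - brF n x < 0 := fun x h0 h => by
    rw [hg]; exact mul_neg_of_pos_of_neg (br_pos n h0) (by linarith [hl x h0 h])
  have gr : ∀ x, b < x → brF (n+1) x - brF n x < 0 := fun x h => by
    rw [hg]; exact mul_neg_of_pos_of_neg (br_pos n (by linarith)) (by linarith [hr x h])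
  have gm : ∀ x, a < x → x < b → 0 < brF (n+1) x - brF n x := fun x h h' => by
    rw [hg]; exact mul_pos (br_pos n (by linarith)) (by linarith [hm x h h'])
  have gm' : ∀ x, a ≤ x → x ≤ b → 0 ≤ brF (n+1) x - brF n x := fun x h h' => by
    rw [hg]; exact mul_nonneg (br_pos n (by linarith)).le (by linarith [hm' x h h'])
  rcases le_or_gt s a with h1 | h1
  · have key : ∀ x, 0 < x → x < s →
        0 < (min 1 (x/s) - (0 * x + 1)) * (brF (n+1) x - brF n x) := by
      intro x h0 hx
      have : x/s < 1 := (div_lt_one hs).2 hx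
      rw [min_eq_right this.le]
      exact mul_pos_of_neg_of_neg (by linarith) (gl x h0 (by linarith))
    refine ⟨0, 1, 0, s, le_rfl, hs, fun x h0 => ?_, key⟩
    rcases lt_or_ge x s with h | h
    · exact (key x h0 h).le
    · rw [min_eq_left ((one_le_div hs).2 h)]; simp
  rcases le_or_gt b s with h2 | h2
  · have key : ∀ x, s < x →
        0 < (min 1 (x/s) - (1/s * x + 0)) * (brF (n+1) x - brF n x) := by
      intro x hx
      have : 1 < x/s := (one_lt_div hs).2 hx
      rw [min_eq_left this.le]
      refine mul_pos_of_neg_of_neg ?_ (gr x (by linarith))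
      rw [one_div_mul_eq_div]; linarith
    refine ⟨1/s, 0, s, s+1, hs.le, by linarith, fun x h0 => ?_, fun x hx _ => key x hx⟩
    rcases lt_or_ge s x with h | h
    · exact (key x h).le
    · rw [min_eq_right ((div_le_one hs).2 h), one_div_mul_eq_div]; simp
  · have hba : 0 < b - a := by linarith
    have e1 : ∀ x, x ≤ s → min 1 (x/s) - ((s-a)/(s*(b-a)) * x + (a/s - (s-a)*a/(s*(b-a))))
        = (x-a) * ((b-s)/(s*(b-a))) := by
      intro x hx
      rw [min_eq_right ((div_le_one hs).2 hx)]; field_simp; ring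
    have e2 : ∀ x, s ≤ x → min 1 (x/s) - ((s-a)/(s*(b-a)) * x + (a/s - (s-a)*a/(s*(b-a))))
        = (b-x) * ((s-a)/(s*(b-a))) := by
      intro x hx
      rw [min_eq_left ((one_le_div hs).2 hx)]; field_simp; ring
    have p1 : 0 < (b-s)/(s*(b-a)) := div_pos (by linarith) (by positivity)
    have p2 : 0 < (s-a)/(s*(b-a)) := div_pos (by linarith) (by positivity)
    refine ⟨(s-a)/(s*(b-a)), a/s - (s-a)*a/(s*(b-a)), a, b, ha.le, hab, fun x h0 => ?_, fun x hx hx' => ?_⟩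
    · rcases le_total x s with h | h
      · rw [e1 x h]
        rcases lt_or_ge x a with h' | h'
        · exact mul_nonneg_of_nonpos_of_nonpos
            (mul_nonpos_of_nonpos_of_nonneg (by linarith) p1.le) (gl x h0 h').le
        · exact mul_nonneg (mul_nonneg (by linarith) p1.le) (gm' x h' (by linarith))
      · rw [e2 x h]
        rcases lt_or_ge b x with h' | h'
        · exact mul_nonneg_of_nonpos_of_nonpos
            (mul_nonpos_of_nonpos_of_nonneg (by linarith) p2.le) (gr x h').le
        · exact mul_nonneg (mul_nonneg (by linarith) p2.le) (gm' x (by linarith) h')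
    · refine mul_pos ?_ (gm x hx hx')
      rcases le_total x s with h | h
      · rw [e1 x h]; exact mul_pos (by linarith) p1
      · rw [e2 x h]; exact mul_pos (by linarith) p2

lemma br_step (n : ℕ) {s : ℝ} (hs : 0 < s) :
    ∫ x in Set.Ioi (0:ℝ), min 1 (x/s) * brF n x < ∫ x in Set.Ioi (0:ℝ), min 1 (x/s) * brF (n+1) x := by
  obtain ⟨α, β, u, v, hu, huv, hnn, hpos⟩ := br_sep n hs
  have I : ∀ k, IntegrableOn (fun x => min 1 (x/s) * brF k x - (α * (x * brF k x) + β * brF k x)) (Set.Ioi 0) :=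
    fun k => (br_min_int k hs).sub (((br_i1 k).const_mul α).add ((br_i0 k).const_mul β))
  have E : ∀ k, ∫ x in Set.Ioi (0:ℝ), (min 1 (x/s) * brF k x - (α * (x * brF k x) + β * brF k x))
      = (∫ x in Set.Ioi (0:ℝ), min 1 (x/s) * brF k x) - (α + β) := by
    intro k
    have J : IntegrableOn (fun x => α * (x * brF k x) + β * brF k x) (Set.Ioi 0) :=
      ((br_i1 k).const_mul α).add ((br_i0 k).const_mul β)
    rw [integral_sub (br_min_int k hs) J,
      integral_add ((br_i1 k).const_mul α) ((br_i0 k).const_mul β), integral_const_mul,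
      integral_const_mul, br_m0, br_m1, mul_one, mul_one]
  have P : 0 < ∫ x in Set.Ioi (0:ℝ), ((min 1 (x/s) * brF (n+1) x - (α * (x * brF (n+1) x) + β * brF (n+1) x))
      - (min 1 (x/s) * brF n x - (α * (x * brF n x) + β * brF n x))) := by
    have eq : ∀ x, ((min 1 (x/s) * brF (n+1) x - (α * (x * brF (n+1) x) + β * brF (n+1) x))
      - (min 1 (x/s) * brF n x - (α * (x * brF n x) + β * brF n x))) =
      (min 1 (x/s) - (α * x + β)) * (brF (n+1) x - brF n x) := fun x => by ring
    rw [setIntegral_pos_iff_support_of_nonneg_ae]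
    · refine lt_of_lt_of_le ?_ (measure_mono (show Set.Ioo u v ⊆ _ from ?_))
      · simpa using huv
      · intro x hx
        refine ⟨?_, lt_of_le_of_lt hu hx.1⟩
        rw [Function.mem_support, eq]
        exact (hpos x hx.1 hx.2).ne'
    · refine (ae_restrict_iff' measurableSet_Ioi).2 (Eventually.of_forall fun x hx => ?_)
      simp only [Pi.zero_apply]
      rw [eq]; exact hnn x hx
    · exact (I (n+1)).sub (I n)
  rw [integral_sub (I (n+1)) (I n), E, E] at P
  linarith

lemma br_gic (n : ℕ) (y : ℝ) :
    upperIncompleteGamma ((n+1:ℕ):ℝ) (((n+1:ℕ):ℝ) * y) / Real.Gamma ((n+1:ℕ):ℝ)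
      = ∫ u in Set.Ioi y, brF n u := by
  have h := integral_comp_mul_left_Ioi
    (fun t : ℝ => t ^ (((n+1:ℕ):ℝ) - 1) * Real.exp (-t)) y (b := ((n+1:ℕ):ℝ)) (by positivity)
  unfold upperIncompleteGamma
  have h2 : ∫ t in Set.Ioi (((n+1:ℕ):ℝ) * y), t ^ (((n+1:ℕ):ℝ) - 1) * Real.exp (-t)
     = ((n+1:ℕ):ℝ) * ∫ x in Set.Ioi y, (((n+1:ℕ):ℝ) * x) ^ (((n+1:ℕ):ℝ) - 1) * Real.exp (-(((n+1:ℕ):ℝ) * x)) := by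
    rw [h, smul_eq_mul, mul_inv_cancel_left₀ (by positivity)]
  rw [h2, mul_comm, mul_div_assoc, mul_comm, ← integral_const_mul]
  congr 1
  ext x
  unfold brF
  rw [show (((n+1:ℕ):ℝ) - 1) = (n:ℝ) by push_cast; ring, Real.rpow_natCast, Nat.cast_succ,
    Real.Gamma_nat_eq_factorial, mul_pow]
  field_simp
  ring

lemma br_prob (n : ℕ) {s : ℝ} (hs : 0 < s) :
    broadcastReachProb (n+1) s = ∫ x in Set.Ioi (0:ℝ), min 1 (x/s) * brF n x := by
  unfold broadcastReachProb
  have hS : MeasurableSet {p : ℝ × ℝ | s * p.1 < p.2} := by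
    apply measurableSet_lt <;> fun_prop
  let K : ℝ → ℝ → ℝ := fun x u => {p : ℝ × ℝ | s * p.1 < p.2}.indicator (fun p => brF n p.2) (x, u)
  have e1 : ∀ x ∈ Set.Ioo (0:ℝ) 1,
      upperIncompleteGamma ((n+1:ℕ):ℝ) (((n+1:ℕ):ℝ) * s * x) / Real.Gamma ((n+1:ℕ):ℝ)
      = ∫ u in Set.Ioi (0:ℝ), K x u := by
    intro x hx
    rw [mul_assoc, br_gic]
    have : ∀ u, K x u = (Set.Ioi (s*x)).indicator (brF n) u := fun u => by
      simp only [K, Set.indicator, Set.mem_ofPred_eq, Set.mem_Ioi]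
    simp_rw [this]
    rw [setIntegral_indicator measurableSet_Ioi, Set.Ioi_inter_Ioi,
      sup_of_le_right (mul_nonneg hs.le hx.1.le)]
  rw [setIntegral_congr_fun measurableSet_Ioo e1]
  rw [integral_integral_swap]
  · refine setIntegral_congr_fun measurableSet_Ioi fun u hu => ?_
    have hu : 0 < u := hu
    have : ∀ x, K x u = (Set.Iio (u/s)).indicator (fun _ => brF n u) x := fun x => by
      simp only [K, Set.indicator, Set.mem_ofPred_eq, Set.mem_Iio, lt_div_iff₀ hs, mul_comm s x]
    simp_rw [this]
    rw [setIntegral_indicator measurableSet_Iio, Set.Ioo_inter_Iio, setIntegral_const,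
      Real.volume_real_Ioo_of_le (by positivity)]
    simp
  · have hi : Integrable (fun p : ℝ × ℝ => (1:ℝ) * brF n p.2)
        ((volume.restrict (Set.Ioo (0:ℝ) 1)).prod (volume.restrict (Set.Ioi (0:ℝ)))) :=
      (integrable_const (1:ℝ)).mul_prod (br_i0 n)
    simp only [one_mul] at hi
    exact hi.indicator hS

/-- For every fixed `s̃ > 0`, `m ↦ p_m(s̃)` is increasing in `m` and converges to
`min {1, 1/s̃}` as `m → ∞`. -/
theorem broadcast_reach_prob_monotone_limit (st : ℝ) (hst : 0 < st) :
    StrictMonoOn (fun m : ℕ => broadcastReachProb m st) (Set.Ici 1) ∧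
    Tendsto (fun m : ℕ => broadcastReachProb m st) atTop (nhds (min 1 (1 / st))) := by
  constructor
  · have hmono : StrictMono (fun n : ℕ => broadcastReachProb (n+1) st) :=
      strictMono_nat_of_lt_succ fun n => by
        rw [br_prob n hst, br_prob (n+1) hst]; exact br_step n hst
    intro a ha b hb hab
    have ha : 1 ≤ a := ha
    have hb : 1 ≤ b := hb
    have := hmono (show a - 1 < b - 1 by omega)
    simp only [Nat.sub_add_cancel ha, Nat.sub_add_cancel hb] at this
    exact this
  · rw [← tendsto_add_atTop_iff_nat 1]
    simp_rw [br_prob _ hst]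
    exact br_limit hst
end

section
/- Let m be a positive integer and s̃ > 0 a real number, and let p_m(s̃) = ∫₀¹ Γ_ic(m, m·s̃·x)/Γ(m) dx with Γ_ic(a, y) = ∫_y^∞ t^(a−1)·e^(−t) dt. Then max{0, 1 − m^m·s̃^m/Γ(m+2)} < p_m(s̃) ≤ min{1, (1/s̃)·(1 − e^(−m·s̃)·(1 + (m−1)·s̃))}. -/
open MeasureTheory Real

noncomputable def auxE (n : ℕ) (y : ℝ) : ℝ := ∑ k ∈ Finset.range (n + 1), y ^ k / (k.factorial : ℝ)

noncomputable def auxF (n : ℕ) (y : ℝ) : ℝ := Real.exp (-y) * auxE n y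

lemma auxE_succ (n : ℕ) (y : ℝ) :
    auxE (n + 1) y = auxE n y + y ^ (n + 1) / ((n + 1).factorial : ℝ) := by
  simp only [auxE]; rw [Finset.sum_range_succ]

lemma auxE_zero (y : ℝ) : auxE 0 y = 1 := by simp [auxE]

lemma hasDerivAt_expneg (y : ℝ) : HasDerivAt (fun y : ℝ => Real.exp (-y)) (-Real.exp (-y)) y := by
  simpa using (hasDerivAt_neg y).exp

lemma hasDerivAt_powfac (n : ℕ) (y : ℝ) :
    HasDerivAt (fun y : ℝ => y ^ (n + 1) / ((n + 1).factorial : ℝ)) (y ^ n / (n.factorial : ℝ)) y := by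
  have h := (hasDerivAt_pow (n + 1) y).div_const ((n + 1).factorial : ℝ)
  refine h.congr_deriv ?_
  have : (n.factorial : ℝ) ≠ 0 := by positivity
  rw [Nat.factorial_succ]; push_cast
  field_simp

lemma auxF_deriv (n : ℕ) (y : ℝ) :
    HasDerivAt (auxF n) (-(Real.exp (-y) * (y ^ n / (n.factorial : ℝ)))) y := by
  induction n with
  | zero =>
    have : auxF 0 = fun y => Real.exp (-y) := by funext y; simp [auxF, auxE_zero]
    rw [this]; simpa using hasDerivAt_expneg y
  | succ n ih =>
    have : auxF (n + 1) = fun y => auxF n y +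
        Real.exp (-y) * (y ^ (n + 1) / ((n + 1).factorial : ℝ)) := by
      funext y; simp only [auxF, auxE_succ]; ring
    rw [this]
    refine (ih.add ((hasDerivAt_expneg y).mul (hasDerivAt_powfac n y))).congr_deriv ?_
    ring

lemma auxF_cont (n : ℕ) : Continuous (auxF n) :=
  continuous_iff_continuousAt.2 fun y => (auxF_deriv n y).continuousAt

lemma auxE_ge (n : ℕ) {y : ℝ} (hy : 0 ≤ y) : 1 ≤ auxE n y := by
  induction n with
  | zero => simp [auxE_zero]
  | succ n ih =>
    rw [auxE_succ]
    have : 0 ≤ y ^ (n + 1) / ((n + 1).factorial : ℝ) := by positivity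
    linarith

lemma auxE_ge' (n : ℕ) {y : ℝ} (hy : 0 ≤ y) : 1 + y ≤ auxE (n + 1) y := by
  induction n with
  | zero => simp [auxE_succ, auxE_zero]
  | succ n ih =>
    rw [auxE_succ]
    have : 0 ≤ y ^ (n + 1 + 1) / ((n + 1 + 1).factorial : ℝ) := by positivity
    linarith

lemma auxF_pos (n : ℕ) {y : ℝ} (hy : 0 ≤ y) : 0 < auxF n y :=
  mul_pos (Real.exp_pos _) (lt_of_lt_of_le one_pos (auxE_ge n hy))

lemma auxF_le_one (n : ℕ) {y : ℝ} (hy : 0 ≤ y) : auxF n y ≤ 1 := by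
  have h : auxE n y ≤ Real.exp y := Real.sum_le_exp_of_nonneg hy _
  calc auxF n y ≤ Real.exp (-y) * Real.exp y := mul_le_mul_of_nonneg_left h (Real.exp_pos _).le
    _ = 1 := by rw [← Real.exp_add]; simp

lemma auxF_zero (n : ℕ) : auxF n 0 = 1 := by
  have h1 := auxE_ge n (le_refl (0 : ℝ))
  have h2 := auxF_le_one n (le_refl (0 : ℝ))
  simp only [auxF, neg_zero, Real.exp_zero, one_mul] at *
  linarith

lemma auxF_gt (n : ℕ) {y : ℝ} (hy : 0 < y) :
    1 - y ^ (n + 1) / ((n + 1).factorial : ℝ) < auxF n y := by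
  have hd : ∀ y, HasDerivAt (fun y => auxF n y + y ^ (n + 1) / ((n + 1).factorial : ℝ))
      (-(Real.exp (-y) * (y ^ n / (n.factorial : ℝ))) + y ^ n / (n.factorial : ℝ)) y :=
    fun y => (auxF_deriv n y).add (hasDerivAt_powfac n y)
  have hm : StrictMonoOn (fun y => auxF n y + y ^ (n + 1) / ((n + 1).factorial : ℝ))
      (Set.Ici 0) := by
    apply strictMonoOn_of_deriv_pos (convex_Ici 0)
    · exact fun y _ => (hd y).continuousAt.continuousWithinAt
    · intro x hx
      rw [interior_Ici] at hx
      rw [(hd x).deriv]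
      have hx : 0 < x := hx
      have h1 : Real.exp (-x) < 1 := by simpa using hx
      have h2 : 0 < x ^ n / (n.factorial : ℝ) := by positivity
      nlinarith
  have := hm (Set.mem_Ici.2 le_rfl) (Set.mem_Ici.2 hy.le) hy
  simp only [auxF_zero] at this
  simp at this
  linarith

lemma auxF_tendsto (n : ℕ) : Filter.Tendsto (auxF n) Filter.atTop (nhds 0) := by
  have : auxF n = fun y => ∑ k ∈ Finset.range (n + 1), (y ^ k * Real.exp (-y)) / (k.factorial : ℝ) := by
    funext y
    simp only [auxF, auxE, Finset.mul_sum]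
    exact Finset.sum_congr rfl fun k _ => by ring
  rw [this]
  have h0 : (0 : ℝ) = ∑ k ∈ Finset.range (n + 1), (0 : ℝ) / (k.factorial : ℝ) := by simp
  rw [h0]
  exact tendsto_finsetSum _ fun k _ => (Real.tendsto_pow_mul_exp_neg_atTop_nhds_zero k).div_const _

lemma uig_eq (n : ℕ) {y : ℝ} (hy : 0 ≤ y) :
    upperIncompleteGamma ((n + 1 : ℕ) : ℝ) y / Real.Gamma ((n + 1 : ℕ) : ℝ) = auxF n y := by
  have hf : (n.factorial : ℝ) ≠ 0 := by positivity
  have hd : ∀ t, HasDerivAt (fun t => -(n.factorial : ℝ) * auxF n t)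
      (t ^ (((n + 1 : ℕ) : ℝ) - 1) * Real.exp (-t)) t := by
    intro t
    refine ((auxF_deriv n t).const_mul (-(n.factorial : ℝ))).congr_deriv ?_
    have : (((n + 1 : ℕ) : ℝ) - 1) = (n : ℝ) := by push_cast; ring
    rw [this, Real.rpow_natCast]
    field_simp
  have h := integral_Ioi_of_hasDerivAt_of_nonneg' (a := y) (fun t _ => hd t)
    (fun t ht => by
      have : 0 < t := lt_of_le_of_lt hy ht
      positivity)
    ((auxF_tendsto n).const_mul (-(n.factorial : ℝ)))
  unfold upperIncompleteGamma
  rw [h]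
  push_cast
  rw [Real.Gamma_nat_eq_factorial]
  field_simp
  ring

lemma prob_eq (n : ℕ) {s : ℝ} (hs : 0 < s) :
    broadcastReachProb (n + 1) s = ∫ x in (0 : ℝ)..1, auxF n (((n + 1 : ℕ) : ℝ) * s * x) := by
  rw [intervalIntegral.integral_of_le zero_le_one, integral_Ioc_eq_integral_Ioo]
  unfold broadcastReachProb
  apply setIntegral_congr_fun measurableSet_Ioo
  intro x hx
  have : 0 < x := hx.1
  exact uig_eq n (by positivity)

lemma auxE_ineq (n : ℕ) {z : ℝ} (hz : 0 ≤ z) :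
    ((n : ℝ) + 1) + n * z ≤ ((n : ℝ) + 1) * auxE (n + 1) z - z * auxE n z := by
  induction n with
  | zero => simp [auxE_succ, auxE_zero]
  | succ n ih =>
    have h := auxE_ge' n hz
    have h1 := auxE_succ (n + 1) z
    have h2 := auxE_succ n z
    have h3 : ((n : ℝ) + 2) * (z ^ (n + 1 + 1) / ((n + 1 + 1).factorial : ℝ)) =
        z * (z ^ (n + 1) / ((n + 1).factorial : ℝ)) := by
      rw [Nat.factorial_succ (n + 1)]
      have : ((n + 1).factorial : ℝ) ≠ 0 := by positivity
      push_cast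
      have h4 : (n : ℝ) + 1 + 1 ≠ 0 := by positivity
      field_simp
      ring
    have h5 : z * auxE (n + 1) z = z * auxE n z + z * (z ^ (n + 1) / ((n + 1).factorial : ℝ)) := by
      rw [h2]; ring
    rw [h5, h1]
    push_cast
    linarith

lemma prob_closed (n : ℕ) {s : ℝ} (hs : 0 < s) :
    ∫ x in (0 : ℝ)..1, auxF n (((n + 1 : ℕ) : ℝ) * s * x) =
      1 / s * (1 - Real.exp (-(((n + 1 : ℕ) : ℝ) * s)) * (auxE (n + 1) (((n + 1 : ℕ) : ℝ) * s)
        - s * auxE n (((n + 1 : ℕ) : ℝ) * s))) := by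
  set z : ℝ := ((n + 1 : ℕ) : ℝ) * s with hz
  have hz0 : 0 < z := by positivity
  have hd : ∀ y, HasDerivAt (fun y => y * auxF n y - ((n : ℝ) + 1) * auxF (n + 1) y)
      (auxF n y) y := by
    intro y
    refine (((hasDerivAt_id y).mul (auxF_deriv n y)).sub
      ((auxF_deriv (n + 1) y).const_mul ((n : ℝ) + 1))).congr_deriv ?_
    have : (n.factorial : ℝ) ≠ 0 := by positivity
    rw [Nat.factorial_succ]; push_cast
    simp only [id]
    field_simp
    ring
  rw [intervalIntegral.integral_comp_mul_left _ hz0.ne',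
    intervalIntegral.integral_eq_sub_of_hasDerivAt (fun y _ => hd y)
      ((auxF_cont n).intervalIntegrable _ _)]
  simp only [mul_zero, mul_one, auxF_zero, smul_eq_mul]
  simp only [auxF]
  have : (n : ℝ) + 1 ≠ 0 := by positivity
  have hz' : z = ((n : ℝ) + 1) * s := by rw [hz]; push_cast; ring
  generalize auxE n z = A
  generalize auxE (n + 1) z = B
  generalize Real.exp (-z) = C
  rw [hz']
  field_simp
  ring

/-- Bounds on the broadcast reachability probability:
`max{0, 1 − m^m s̃^m/Γ(m+2)} < p_m(s̃) ≤ min{1, (1/s̃)(1 − e^(−m s̃)(1 + (m−1)s̃))}`. -/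
theorem broadcast_reach_prob_bounds (m : ℕ) (hm : 0 < m) (st : ℝ) (hst : 0 < st) :
    max 0 (1 - (m : ℝ) ^ m * st ^ m / Real.Gamma ((m : ℝ) + 2)) < broadcastReachProb m st ∧
    broadcastReachProb m st
      ≤ min 1 ((1 / st) * (1 - Real.exp (-((m : ℝ) * st)) * (1 + ((m : ℝ) - 1) * st))) := by
  obtain ⟨n, rfl⟩ : ∃ n, m = n + 1 := ⟨m - 1, by omega⟩
  rw [prob_eq n hst]
  have hz0 : 0 < ((n + 1 : ℕ) : ℝ) * st := by positivity
  have hc : Continuous fun x : ℝ => auxF n (((n + 1 : ℕ) : ℝ) * st * x) :=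
    (auxF_cont n).comp (continuous_const.mul continuous_id)
  refine ⟨max_lt ?_ ?_, le_min ?_ ?_⟩
  · refine intervalIntegral.intervalIntegral_pos_of_pos_on (hc.intervalIntegrable _ _) ?_ one_pos
    intro x hx
    have : 0 < x := hx.1
    exact auxF_pos n (by positivity)
  · have hG : Real.Gamma (((n + 1 : ℕ) : ℝ) + 2) = ((n : ℝ) + 2) * ((n + 1).factorial : ℝ) := by
      have : (((n + 1 : ℕ) : ℝ) + 2) = ((n + 2 : ℕ) : ℝ) + 1 := by push_cast; ring
      rw [this, Real.Gamma_nat_eq_factorial, Nat.factorial_succ (n + 1)]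
      push_cast; ring
    have hl : ∫ x in (0 : ℝ)..1, (1 - (((n + 1 : ℕ) : ℝ) * st) ^ (n + 1) /
        ((n + 1).factorial : ℝ) * x ^ (n + 1)) =
        1 - ((n + 1 : ℕ) : ℝ) ^ (n + 1) * st ^ (n + 1) / Real.Gamma (((n + 1 : ℕ) : ℝ) + 2) := by
      rw [intervalIntegral.integral_sub (by simp)
        (Continuous.intervalIntegrable (by fun_prop) _ _), intervalIntegral.integral_const_mul,
        integral_pow, hG, mul_pow]
      have h1 : (n : ℝ) + 1 + 1 ≠ 0 := by positivity
      have h2 : (n : ℝ) + 2 ≠ 0 := by positivity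
      simp
      field_simp
      ring
    rw [← hl]
    have key : ∀ x : ℝ, 0 < x → 1 - (((n + 1 : ℕ) : ℝ) * st) ^ (n + 1) /
        ((n + 1).factorial : ℝ) * x ^ (n + 1) < auxF n (((n + 1 : ℕ) : ℝ) * st * x) := by
      intro x hx
      have := auxF_gt n (mul_pos hz0 hx)
      rw [mul_pow _ x] at this
      convert this using 2
      ring
    refine intervalIntegral.integral_lt_integral_of_continuousOn_of_le_of_exists_lt one_pos
      (Continuous.continuousOn (by fun_prop)) hc.continuousOn
      (fun x hx => (key x hx.1).le) ⟨1, by simp, key 1 one_pos⟩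
  · have h := intervalIntegral.integral_mono_on (a := (0 : ℝ)) (b := 1) zero_le_one
      (μ := volume) (g := fun _ => (1 : ℝ)) (hc.intervalIntegrable 0 1) (by simp)
      (fun x hx => auxF_le_one n (mul_nonneg hz0.le hx.1))
    simpa using h
  · rw [prob_closed n hst]
    have h := auxE_ineq n hz0.le
    refine mul_le_mul_of_nonneg_left (sub_le_sub_left
      (mul_le_mul_of_nonneg_left ?_ (Real.exp_pos _).le) _) (by positivity)
    have hn : (0 : ℝ) < (n : ℝ) + 1 := by positivity
    refine le_of_mul_le_mul_left ?_ hn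
    generalize auxE n (((n + 1 : ℕ) : ℝ) * st) = A at *
    generalize auxE (n + 1) (((n + 1 : ℕ) : ℝ) * st) = B at *
    push_cast at *
    nlinarith
end

section
/- Let m be a positive integer, ε ∈ (0, 1), and a, s > 0 real numbers. If a·s < (Γ(m+2)·ε)^(1/m)/m, then p_m(a·s) > 1 − ε, where p_m(s̃) = ∫₀¹ Γ_ic(m, m·s̃·x)/Γ(m) dx and Γ_ic(a, y) = ∫_y^∞ t^(a−1)·e^(−t) dt. In particular, for m = 1 (Rayleigh fading), a·s < 2·ε suffices. -/
open MeasureTheory Real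

theorem uig_eq_s15 (m : ℕ) (hm : 0 < m) (y : ℝ) (hy : 0 ≤ y) :
    upperIncompleteGamma m y = Real.Gamma m - ∫ t in (0:ℝ)..y, t ^ (m - 1) * Real.exp (-t) := by
  have hc : ∀ t : ℝ, t ^ ((m:ℝ) - 1) = t ^ (m - 1) := by
    intro t
    rw [← Real.rpow_natCast t (m-1), Nat.cast_sub hm]
    simp
  have hmr : (0:ℝ) < m := by exact_mod_cast hm
  have hG := Real.Gamma_eq_integral hmr
  have hI := Real.GammaIntegral_convergent hmr
  simp only [hc] at hG hI
  have hf : IntegrableOn (fun t : ℝ => t ^ (m - 1) * Real.exp (-t)) (Set.Ioi 0) := by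
    simpa [mul_comm] using hI
  unfold upperIncompleteGamma
  simp only [hc]
  rw [hG, intervalIntegral.integral_of_le hy]
  have := setIntegral_union (Set.Ioc_disjoint_Ioi (a := 0) (le_refl y)) measurableSet_Ioi
    (hf.mono_set Set.Ioc_subset_Ioi_self) (hf.mono_set (Set.Ioi_subset_Ioi hy))
  rw [Set.Ioc_union_Ioi_eq_Ioi hy] at this
  simp only [mul_comm (Real.exp _)]
  linarith

theorem lig_le (m : ℕ) (hm : 0 < m) (y : ℝ) (hy : 0 ≤ y) :
    ∫ t in (0:ℝ)..y, t ^ (m - 1) * Real.exp (-t) ≤ y ^ m / m := by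
  have h : ∫ t in (0:ℝ)..y, t ^ (m - 1) = y ^ m / m := by
    obtain ⟨k, rfl⟩ : ∃ k, m = k + 1 := ⟨m - 1, by omega⟩
    simp [integral_pow]
  rw [← h]
  apply intervalIntegral.integral_mono_on hy
  · exact Continuous.intervalIntegrable (by fun_prop) _ _
  · exact Continuous.intervalIntegrable (by fun_prop) _ _
  · intro t ht
    have : Real.exp (-t) ≤ 1 := Real.exp_le_one_iff.2 (by linarith [ht.1])
    exact mul_le_of_le_one_right (pow_nonneg ht.1 _) this

theorem brp_ge (m : ℕ) (hm : 0 < m) (st : ℝ) (hst : 0 < st) :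
    1 - ((m:ℝ) * st) ^ m / Real.Gamma ((m:ℝ) + 2) ≤ broadcastReachProb m st := by
  have hmr : (0:ℝ) < m := by exact_mod_cast hm
  have hGp := Real.Gamma_pos_of_pos hmr
  have hG2 : Real.Gamma ((m:ℝ) + 2) = (m + 1) * (m * Real.Gamma m) := by
    rw [show (m:ℝ) + 2 = (m + 1) + 1 by ring, Real.Gamma_add_one (by positivity),
      Real.Gamma_add_one (by positivity)]
  have hcont : Continuous (fun x : ℝ =>
      (Real.Gamma m - ∫ t in (0:ℝ)..((m:ℝ) * st * x), t ^ (m - 1) * Real.exp (-t))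
        / Real.Gamma m) := by
    have h1 : Continuous (fun y : ℝ => ∫ t in (0:ℝ)..y, t ^ (m - 1) * Real.exp (-t)) :=
      intervalIntegral.continuous_primitive
        (fun a b => Continuous.intervalIntegrable (by fun_prop) _ _) 0
    have h2 := h1.comp (continuous_const.mul continuous_id : Continuous fun x : ℝ => (m:ℝ) * st * x)
    exact (continuous_const.sub h2).div_const _
  have hint : ∀ g : ℝ → ℝ, Continuous g → IntegrableOn g (Set.Ioo (0:ℝ) 1) := fun g hg =>
    (hg.integrableOn_Icc (a := 0) (b := 1)).mono_set Set.Ioo_subset_Icc_self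
  have hval : ∫ x in Set.Ioo (0:ℝ) 1, (1 - (((m:ℝ) * st) ^ m / (m * Real.Gamma m)) * x ^ m)
      = 1 - ((m:ℝ) * st) ^ m / Real.Gamma ((m:ℝ) + 2) := by
    rw [← integral_Ioc_eq_integral_Ioo, ← intervalIntegral.integral_of_le zero_le_one,
      intervalIntegral.integral_sub (Continuous.intervalIntegrable (by fun_prop) _ _)
        (Continuous.intervalIntegrable (by fun_prop) _ _),
      intervalIntegral.integral_const_mul, integral_pow, hG2]
    simp
    field_simp
  rw [← hval]
  unfold broadcastReachProb
  have hcongr : ∀ x ∈ Set.Ioo (0:ℝ) 1, upperIncompleteGamma m ((m:ℝ) * st * x) / Real.Gamma m =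
      (Real.Gamma m - ∫ t in (0:ℝ)..((m:ℝ) * st * x), t ^ (m - 1) * Real.exp (-t))
        / Real.Gamma m := by
    intro x hx
    rw [uig_eq_s15 m hm _ (by have := hx.1; positivity)]
  rw [setIntegral_congr_fun measurableSet_Ioo hcongr]
  apply setIntegral_mono_on (hint _ (by fun_prop)) (hint _ hcont) measurableSet_Ioo
  intro x hx
  have := lig_le m hm ((m:ℝ) * st * x) (by have := hx.1; positivity)
  rw [le_div_iff₀ hGp]
  have e : (1 - (((m:ℝ) * st) ^ m / (m * Real.Gamma m)) * x ^ m) * Real.Gamma m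
      = Real.Gamma m - ((m:ℝ) * st * x) ^ m / m := by
    rw [mul_pow _ x]
    field_simp
  rw [e]
  linarith

/-- ε-reachability: if `a s < (Γ(m+2) ε)^(1/m)/m` then `p_m(a s) > 1 − ε`;
in particular, for `m = 1` (Rayleigh fading) the condition `a s < 2 ε` suffices. -/
theorem epsilon_reachability (m : ℕ) (hm : 0 < m) (ε a s : ℝ)
    (hε : ε ∈ Set.Ioo (0 : ℝ) 1) (ha : 0 < a) (hs : 0 < s) :
    (a * s < (Real.Gamma ((m : ℝ) + 2) * ε) ^ (1 / (m : ℝ)) / m →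
      broadcastReachProb m (a * s) > 1 - ε) ∧
    (m = 1 → a * s < 2 * ε → broadcastReachProb m (a * s) > 1 - ε) := by
  have main : a * s < (Real.Gamma ((m : ℝ) + 2) * ε) ^ (1 / (m : ℝ)) / m →
      broadcastReachProb m (a * s) > 1 - ε := by
    intro h
    have hmr : (0:ℝ) < m := by exact_mod_cast hm
    have hGp : 0 < Real.Gamma ((m:ℝ) + 2) := Real.Gamma_pos_of_pos (by positivity)
    have hst : 0 < a * s := mul_pos ha hs
    have h0 := brp_ge m hm (a * s) hst
    have hε0 := hε.1
    rw [lt_div_iff₀ hmr, mul_comm] at h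
    have h1 := pow_lt_pow_left₀ h (by positivity) hm.ne'
    rw [one_div, Real.rpow_inv_natCast_pow (by positivity) hm.ne'] at h1
    have h2 : ((m:ℝ) * (a * s)) ^ m / Real.Gamma ((m:ℝ) + 2) < ε := by
      rw [div_lt_iff₀ hGp]; linarith
    linarith
  refine ⟨main, ?_⟩
  rintro rfl h
  apply main
  have : Real.Gamma (((1:ℕ):ℝ) + 2) = 2 := by
    rw [show ((1:ℕ):ℝ) + 2 = ((2:ℕ):ℝ) + 1 by norm_num, Real.Gamma_nat_eq_factorial]
    norm_num [Nat.factorial]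
  rw [this]
  simpa using h
end

section
/- Let m be a positive integer and let p_m(s̃) = ∫₀¹ Γ_ic(m, m·s̃·x)/Γ(m) dx for s̃ > 0, with Γ_ic(a, y) = ∫_y^∞ t^(a−1)·e^(−t) dt. Then, as s̃ → 0 from the right, p_m(s̃) − (1 − (m^m/Γ(m+2))·s̃^m) = O(s̃^(m+1)); that is, p_m(s̃) = 1 − (m^m/Γ(m+2))·s̃^m + O(s̃^(m+1)). -/
open MeasureTheory Real Filter Asymptotics

lemma aux_uig (n : ℕ) (y : ℝ) (hy : 0 ≤ y) :
    upperIncompleteGamma ((n + 1 : ℕ) : ℝ) y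
      = Real.Gamma ((n + 1 : ℕ) : ℝ) - ∫ t in (0 : ℝ)..y, t ^ n * Real.exp (-t) := by
  have hpos : (0 : ℝ) < ((n + 1 : ℕ) : ℝ) := by positivity
  have hint := Real.GammaIntegral_convergent hpos
  have he : ∀ t : ℝ, Real.exp (-t) * t ^ (((n + 1 : ℕ) : ℝ) - 1) = t ^ n * Real.exp (-t) := by
    intro t
    have : (((n + 1 : ℕ) : ℝ) - 1) = (n : ℝ) := by push_cast; ring
    rw [this, Real.rpow_natCast, mul_comm]
  have he2 : ∀ t : ℝ, t ^ (((n + 1 : ℕ) : ℝ) - 1) * Real.exp (-t) = t ^ n * Real.exp (-t) := by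
    intro t
    rw [← he, mul_comm]
  rw [Real.Gamma_eq_integral hpos]
  unfold upperIncompleteGamma
  simp only [he, he2] at hint ⊢
  rw [← intervalIntegral.integral_Ioi_sub_Ioi hint hy]
  ring

lemma aux_bound (n : ℕ) (y : ℝ) (hy : 0 ≤ y) :
    |(∫ t in (0 : ℝ)..y, t ^ n * Real.exp (-t)) - y ^ (n + 1) / (n + 1)| ≤ y ^ (n + 2) := by
  have h1 : y ^ (n + 1) / (n + 1) = ∫ t in (0 : ℝ)..y, t ^ n := by
    rw [integral_pow]; simp
  rw [h1, ← intervalIntegral.integral_sub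
    (Continuous.intervalIntegrable (by fun_prop) _ _)
    (Continuous.intervalIntegrable (by fun_prop) _ _)]
  have := intervalIntegral.norm_integral_le_of_norm_le_const (a := 0) (b := y)
    (f := fun t : ℝ => t ^ n * Real.exp (-t) - t ^ n) (C := y ^ (n + 1)) (by
      intro t ht
      rw [Set.uIoc_of_le hy] at ht
      have h2 : Real.exp (-t) ≤ 1 := Real.exp_le_one_iff.2 (by linarith [ht.1])
      have h3 := Real.add_one_le_exp (-t)
      have h4 : |Real.exp (-t) - 1| ≤ t := abs_le.2 ⟨by linarith, by linarith [ht.1]⟩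
      have h5 : t ^ n ≤ y ^ n := pow_le_pow_left₀ ht.1.le ht.2 n
      have h6 : t ^ n * Real.exp (-t) - t ^ n = t ^ n * (Real.exp (-t) - 1) := by ring
      rw [h6, Real.norm_eq_abs, abs_mul, abs_of_nonneg (pow_nonneg ht.1.le n), pow_succ]
      exact mul_le_mul h5 (h4.trans ht.2) (abs_nonneg _) (pow_nonneg hy n))
  rw [sub_zero, abs_of_nonneg hy, ← pow_succ, Real.norm_eq_abs] at this
  exact this

/-- Taylor expansion of the broadcast reachability probability at `s̃ = 0`:
`p_m(s̃) = 1 − (m^m/Γ(m+2)) s̃^m + O(s̃^(m+1))` as `s̃ → 0⁺`. -/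
theorem broadcast_reach_prob_taylor (m : ℕ) (hm : 0 < m) :
    (fun st : ℝ => broadcastReachProb m st
        - (1 - (m : ℝ) ^ m / Real.Gamma ((m : ℝ) + 2) * st ^ m))
      =O[nhdsWithin 0 (Set.Ioi 0)] fun st : ℝ => st ^ (m + 1) := by
  obtain ⟨n, rfl⟩ : ∃ n, m = n + 1 := ⟨m - 1, by omega⟩
  have hΓ : 0 < Real.Gamma ((n + 1 : ℕ) : ℝ) := Real.Gamma_pos_of_pos (by positivity)
  have hΓ2 : Real.Gamma (((n + 1 : ℕ) : ℝ) + 2)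
      = ((n : ℝ) + 2) * (n + 1) * Real.Gamma ((n + 1 : ℕ) : ℝ) := by
    have e : ((n + 1 : ℕ) : ℝ) + 2 = (((n + 1 : ℕ) : ℝ) + 1) + 1 := by ring
    rw [e, Real.Gamma_add_one (by positivity), Real.Gamma_add_one (by positivity)]
    push_cast; ring
  set g := Real.Gamma ((n + 1 : ℕ) : ℝ) with hg
  set M : ℝ := ((n + 1 : ℕ) : ℝ) with hM
  have hM0 : 0 < M := by rw [hM]; positivity
  have hMn : (n : ℝ) + 1 = M := by rw [hM]; push_cast; ring
  refine IsBigO.of_bound (M ^ (n + 2) / g) ?_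
  filter_upwards [self_mem_nhdsWithin] with s hs
  have hs : 0 < s := hs
  let F : ℝ → ℝ := fun y => ∫ t in (0 : ℝ)..y, t ^ n * Real.exp (-t)
  have hF : Continuous F := intervalIntegral.continuous_primitive
    (fun a b => Continuous.intervalIntegrable (by fun_prop) _ _) 0
  have h1 : broadcastReachProb (n + 1) s = ∫ x in (0 : ℝ)..1, (g - F (M * s * x)) / g := by
    unfold broadcastReachProb
    rw [intervalIntegral.integral_of_le zero_le_one, integral_Ioc_eq_integral_Ioo]
    refine setIntegral_congr_fun measurableSet_Ioo ?_
    intro x hx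
    have hx0 := hx.1
    simp only
    rw [aux_uig n _ (by positivity)]
  have h2 : 1 - M ^ (n + 1) / Real.Gamma (M + 2) * s ^ (n + 1)
      = ∫ x in (0 : ℝ)..1, (1 - M ^ n * s ^ (n + 1) / g * x ^ (n + 1)) := by
    rw [intervalIntegral.integral_sub (Continuous.intervalIntegrable (by fun_prop) _ _)
      (Continuous.intervalIntegrable (by fun_prop) _ _), intervalIntegral.integral_const_mul,
      integral_pow, hΓ2, hMn]
    have : (n : ℝ) + 2 ≠ 0 := by positivity
    have h3 : ((n + 1 : ℕ) : ℝ) + 1 = n + 2 := by push_cast; ring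
    rw [h3]
    simp
    field_simp
    ring
  rw [h1, h2, ← intervalIntegral.integral_sub
    (Continuous.intervalIntegrable (by fun_prop) _ _)
    (Continuous.intervalIntegrable (by fun_prop) _ _)]
  refine (intervalIntegral.norm_integral_le_of_norm_le_const
    (C := M ^ (n + 2) / g * s ^ (n + 2)) ?_).trans ?_
  · intro x hx
    rw [Set.uIoc_of_le zero_le_one] at hx
    have hx0 := hx.1
    have hb := aux_bound n (M * s * x) (by positivity)
    have e : (g - F (M * s * x)) / g - (1 - M ^ n * s ^ (n + 1) / g * x ^ (n + 1))
        = -(F (M * s * x) - (M * s * x) ^ (n + 1) / (n + 1)) / g := by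
      rw [hMn]
      field_simp
      ring
    rw [e, Real.norm_eq_abs, abs_div, abs_neg, abs_of_pos hΓ, div_mul_eq_mul_div]
    refine div_le_div_of_nonneg_right (hb.trans ?_) hΓ.le
    rw [mul_pow, mul_pow]
    exact mul_le_of_le_one_right (by positivity) (pow_le_one₀ hx0.le hx.2)
  · rw [Real.norm_of_nonneg (by positivity)]
    simp
end

section
/- Let m > 0 and c > 0 be real, and define g(x) = m^(m+1)·c/(m + c·x)^(m+1) for x > 0. Then g is a probability density on (0, ∞) (i.e., ∫₀^∞ g(x) dx = 1), and its differential entropy satisfies −∫₀^∞ g(x)·ln(g(x)) dx = 1 + 1/m − ln c. -/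
open MeasureTheory Real

lemma aux_main (m c : ℝ) (hm : 0 < m) (hc : 0 < c) :
    (IntegrableOn (fun x : ℝ => c * (1 + c / m * x) ^ (-m - 1)) (Set.Ioi 0) ∧
      ∫ x in Set.Ioi (0 : ℝ), c * (1 + c / m * x) ^ (-m - 1) = 1) ∧
    (IntegrableOn (fun x : ℝ => c * (1 + c / m * x) ^ (-m - 1) * Real.log (1 + c / m * x))
        (Set.Ioi 0) ∧
      ∫ x in Set.Ioi (0 : ℝ), c * (1 + c / m * x) ^ (-m - 1) * Real.log (1 + c / m * x)
        = 1 / m) := by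
  have hcm : 0 < c / m := by positivity
  have hu : ∀ x ∈ Set.Ici (0 : ℝ), 1 ≤ 1 + c / m * x := by
    intro x hx
    have : 0 ≤ c / m * x := mul_nonneg hcm.le hx
    linarith
  have ht : Filter.Tendsto (fun x : ℝ => 1 + c / m * x) Filter.atTop Filter.atTop :=
    Filter.tendsto_atTop_add_const_left _ _ (Filter.tendsto_id.const_mul_atTop hcm)
  have hd0 : ∀ x : ℝ, HasDerivAt (fun x : ℝ => 1 + c / m * x) (c / m) x := by
    intro x
    simpa using ((hasDerivAt_id x).const_mul (c / m)).const_add 1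
  have hd1 : ∀ x ∈ Set.Ici (0 : ℝ), HasDerivAt (fun x : ℝ => (1 + c / m * x) ^ (-m))
      (-(c * (1 + c / m * x) ^ (-m - 1))) x := by
    intro x hx
    have h1 := hu x hx
    have h := (hd0 x).rpow_const (p := -m) (Or.inl (by linarith))
    convert h using 1
    field_simp
  have hd2 : ∀ x ∈ Set.Ici (0 : ℝ), HasDerivAt
      (fun x : ℝ => -((1 + c / m * x) ^ (-m) * Real.log (1 + c / m * x))
        - (1 + c / m * x) ^ (-m) / m)
      (c * (1 + c / m * x) ^ (-m - 1) * Real.log (1 + c / m * x)) x := by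
    intro x hx
    have h1 := hu x hx
    have h := (((hd1 x hx).mul ((hd0 x).log (by linarith))).neg).sub ((hd1 x hx).div_const m)
    refine h.congr_deriv ?_
    have e : (1 + c / m * x) ^ (-m) = (1 + c / m * x) ^ (-m - 1) * (1 + c / m * x) := by
      have h4 : 1 + c / m * x ≠ 0 := by linarith
      rw [Real.rpow_sub_one h4, div_mul_cancel₀ _ h4]
    have h3 : 1 + c / m * x ≠ 0 := by linarith
    rw [e]
    generalize (1 + c / m * x) ^ (-m - 1) = A
    generalize Real.log (1 + c / m * x) = L
    generalize 1 + c / m * x = u at *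
    field_simp
    ring
  have l1 : Filter.Tendsto (fun x : ℝ => (1 + c / m * x) ^ (-m)) Filter.atTop (nhds 0) :=
    (tendsto_rpow_neg_atTop hm).comp ht
  have l0 : Filter.Tendsto (fun u : ℝ => u ^ (-m) * Real.log u) Filter.atTop (nhds 0) := by
    refine (isLittleO_log_rpow_atTop hm).tendsto_div_nhds_zero.congr' ?_
    filter_upwards [Filter.eventually_gt_atTop 0] with u hu
    rw [Real.rpow_neg hu.le, div_eq_mul_inv, mul_comm]
  have l2 := (l0.comp ht).neg.sub (l1.div_const m)
  simp only [Function.comp_def] at l2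
  have l1' := l1.neg
  have hd1' : ∀ x ∈ Set.Ici (0 : ℝ), HasDerivAt (fun x : ℝ => -(1 + c / m * x) ^ (-m))
      (c * (1 + c / m * x) ^ (-m - 1)) x := by
    intro x hx
    exact (hd1 x hx).neg.congr_deriv (neg_neg _)
  have p1 : ∀ x ∈ Set.Ioi (0 : ℝ), 0 ≤ c * (1 + c / m * x) ^ (-m - 1) := by
    intro x hx
    have h1 := hu x (Set.mem_Ici.2 (le_of_lt hx))
    have : 0 ≤ 1 + c / m * x := by linarith
    positivity
  have p2 : ∀ x ∈ Set.Ioi (0 : ℝ),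
      0 ≤ c * (1 + c / m * x) ^ (-m - 1) * Real.log (1 + c / m * x) := by
    intro x hx
    exact mul_nonneg (p1 x hx) (Real.log_nonneg (hu x (Set.mem_Ici.2 (le_of_lt hx))))
  refine ⟨⟨integrableOn_Ioi_deriv_of_nonneg' hd1' p1 l1', ?_⟩,
    ⟨integrableOn_Ioi_deriv_of_nonneg' hd2 p2 l2, ?_⟩⟩
  · rw [integral_Ioi_of_hasDerivAt_of_nonneg' hd1' p1 l1']
    simp
  · rw [integral_Ioi_of_hasDerivAt_of_nonneg' hd2 p2 l2]
    simp

/-- The density `g(x) = m^(m+1) c/(m + c x)^(m+1)` of the path loss with fading of the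
nearest node (`δ = 1`, Nakagami-`m` fading) integrates to `1` on `(0, ∞)`, and its
differential entropy is `h(g) = −∫₀^∞ g ln g = 1 + 1/m − ln c`. -/
theorem nearest_node_entropy (m c : ℝ) (hm : 0 < m) (hc : 0 < c) :
    (∫ x in Set.Ioi (0 : ℝ), m ^ (m + 1) * c / (m + c * x) ^ (m + 1) = 1) ∧
    (-∫ x in Set.Ioi (0 : ℝ),
        (m ^ (m + 1) * c / (m + c * x) ^ (m + 1)) *
          Real.log (m ^ (m + 1) * c / (m + c * x) ^ (m + 1))
      = 1 + 1 / m - Real.log c) := by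
  obtain ⟨⟨i1, e1⟩, ⟨i2, e2⟩⟩ := aux_main m c hm hc
  have hpos : ∀ x ∈ Set.Ioi (0 : ℝ), 0 < 1 + c / m * x := by
    intro x hx
    have : 0 < x := hx
    positivity
  have key : ∀ x ∈ Set.Ioi (0 : ℝ), m ^ (m + 1) * c / (m + c * x) ^ (m + 1)
      = c * (1 + c / m * x) ^ (-m - 1) := by
    intro x hx
    have h := hpos x hx
    have e : m + c * x = m * (1 + c / m * x) := by field_simp
    have e' : -m - 1 = -(m + 1) := by ring
    rw [e, Real.mul_rpow hm.le h.le, e', Real.rpow_neg h.le]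
    have := Real.rpow_pos_of_pos hm (m + 1)
    have := Real.rpow_pos_of_pos h (m + 1)
    generalize m ^ (m + 1) = a at *
    generalize (1 + c / m * x) ^ (m + 1) = b at *
    field_simp
  constructor
  · rw [setIntegral_congr_fun measurableSet_Ioi key, e1]
  · have key2 : ∀ x ∈ Set.Ioi (0 : ℝ), (m ^ (m + 1) * c / (m + c * x) ^ (m + 1)) *
          Real.log (m ^ (m + 1) * c / (m + c * x) ^ (m + 1))
        = Real.log c * (c * (1 + c / m * x) ^ (-m - 1)) -
          (m + 1) * (c * (1 + c / m * x) ^ (-m - 1) * Real.log (1 + c / m * x)) := by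
      intro x hx
      have h := hpos x hx
      rw [key x hx, Real.log_mul hc.ne' (Real.rpow_pos_of_pos h _).ne', Real.log_rpow h]
      ring
    rw [setIntegral_congr_fun measurableSet_Ioi key2,
      integral_sub (i1.const_mul _) (i2.const_mul _), integral_const_mul (Real.log c),
      integral_const_mul (m + 1), e1, e2]
    field_simp
    ring
end
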